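/- arXiv:2312.14420 — 2 statements merged into one kernel-verified Lean document; each statement's English description precedes it below -/
import Mathlib

section
/- Let (Ω, F, P) be a probability space with an increasing filtration F₀ ⊆ F₁ ⊆ … ⊆ F_n ⊆ F, and let (X_k)_{k=1}^n be a complex-valued martingale difference sequence with respect to this filtration, i.e., X_k is F_k-measurable and E[X_k | F_{k−1}] = 0 for each k; assume E|X_k|^q < ∞ for all k. Then for every q > 1 there exists a constant K_q depending only on q such that E|∑_{k=1}^n X_k|^q ≤ K_q { E( ∑_{k=1}^n E[|X_k|² | F_{k−1}] )^{q/2} + ∑_{k=1}^n E|X_k|^q }. -/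
open MeasureTheory ProbabilityTheory Filter
open scoped BigOperators

/-!
Write `f n = X 0 + ⋯ + X (n - 1)`. Expanding `‖f (k + 1)‖ ^ q` around `f k`, the linear term
`‖f k‖ ^ (q - 2) * ⟪f k, X k⟫` has mean zero, so `E ‖f n‖ ^ q` is at most the sum of the mean
second-order remainders. For `q ≤ 2` the remainder is at most `6 * ‖X k‖ ^ q`. For `2 ≤ q` it is at
most a constant times `‖f k‖ ^ (q - 2) * ‖X k‖ ^ 2 + ‖X k‖ ^ q`. Conditioning on `ℱ k` replaces
`‖X k‖ ^ 2` by its conditional expectation, so that, with `M` the running maximum of `‖f‖` and `V`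
the predictable quadratic variation, the first terms add up to at most `E (M ^ (q - 2) * V)`.
Young's inequality splits this into a small multiple of `E M ^ q`, absorbed on the left by means of
Doob's maximal inequality, and a multiple of `E V ^ (q / 2)`.

The scalar inequalities behind these steps, including the pathwise form of Doob's, are instances of
the tangent inequality `q * (x ^ (q - 1) * y) ≤ (q - 1) * x ^ q + y ^ q`.
-/

section Real

variable {p q x y M : ℝ}

lemma rpow_sub_one_mul_self (hx : 0 ≤ x) (hq : q ≠ 0) : x ^ (q - 1) * x = x ^ q := by
  rw [← Real.rpow_add_one' hx (by simpa using hq), sub_add_cancel]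

lemma rpow_sub_two_mul_sq (hx : 0 ≤ x) (hq : q ≠ 0) : x ^ (q - 2) * x ^ 2 = x ^ q := by
  rw [← Real.rpow_two, ← Real.rpow_add' hx (by simpa using hq), sub_add_cancel]

lemma sq_rpow_half (hx : 0 ≤ x) (q : ℝ) : (x ^ 2) ^ (q / 2) = x ^ q := by
  rw [← Real.rpow_two, ← Real.rpow_mul hx, mul_div_cancel₀ q two_ne_zero]

lemma mul_rpow_sub_one_mul_le (hq : 1 ≤ q) (hx : 0 ≤ x) (hy : 0 ≤ y) :
    q * (x ^ (q - 1) * y) ≤ (q - 1) * x ^ q + y ^ q := by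
  have hq0 : 0 < q := by linarith
  have amgm := Real.geom_mean_le_arith_mean2_weighted (w₁ := (q - 1) / q) (w₂ := 1 / q)
    (div_nonneg (by linarith) hq0.le) (by positivity) (Real.rpow_nonneg hx q)
    (Real.rpow_nonneg hy q) (by field_simp; ring)
  rw [← Real.rpow_mul hx, ← Real.rpow_mul hy, mul_div_cancel₀ _ hq0.ne',
    mul_div_cancel₀ _ hq0.ne', Real.rpow_one] at amgm
  calc q * (x ^ (q - 1) * y) ≤ q * ((q - 1) / q * x ^ q + 1 / q * y ^ q) := by gcongr
    _ = (q - 1) * x ^ q + y ^ q := by field_simp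

lemma rpow_sub_rpow_le (hp : 1 ≤ p) (hx : 0 ≤ x) (hy : 0 ≤ y) :
    x ^ p - y ^ p ≤ p * (x ^ (p - 1) * (x - y)) := by
  linear_combination mul_rpow_sub_one_mul_le hp hx hy -
    p * rpow_sub_one_mul_self hx (by linarith : p ≠ 0)

lemma abs_rpow_sub_rpow_le (hp : 1 ≤ p) (hx : 0 ≤ x) (hy : 0 ≤ y) (hxM : x ≤ M) (hyM : y ≤ M) :
    |x ^ p - y ^ p| ≤ p * (M ^ (p - 1) * |x - y|) := by
  wlog hyx : y ≤ x generalizing x y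
  · rw [abs_sub_comm, abs_sub_comm x]
    exact this hy hx hyM hxM (le_of_not_ge hyx)
  rw [abs_of_nonneg (sub_nonneg.2 (Real.rpow_le_rpow hy hyx (by linarith))),
    abs_of_nonneg (sub_nonneg.2 hyx)]
  refine (rpow_sub_rpow_le hp hx hy).trans ?_
  have := sub_nonneg.2 hyx
  gcongr

lemma add_rpow_le_two_rpow_mul_add (hp : 0 ≤ p) (hx : 0 ≤ x) (hy : 0 ≤ y) :
    (x + y) ^ p ≤ 2 ^ p * (x ^ p + y ^ p) := by
  wlog hxy : x ≤ y generalizing x y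
  · rw [add_comm x, add_comm (x ^ p)]
    exact this hy hx (le_of_not_ge hxy)
  calc (x + y) ^ p ≤ (2 * y) ^ p := by gcongr; linarith
    _ = 2 ^ p * y ^ p := Real.mul_rpow zero_le_two hy
    _ ≤ 2 ^ p * (x ^ p + y ^ p) := by gcongr; exact le_add_of_nonneg_left (by positivity)

lemma rpow_sub_two_mul_le {c : ℝ} (hq : 2 ≤ q) (hc : 0 < c) (hx : 0 ≤ x) (hy : 0 ≤ y) :
    x ^ (q - 2) * y ≤ c⁻¹ * x ^ q + c ^ (q / 2 - 1) * y ^ (q / 2) := by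
  have young := mul_rpow_sub_one_mul_le (q := q / 2) (by linarith) (sq_nonneg x)
    (mul_nonneg hc.le hy)
  have hpow : (x ^ 2) ^ (q / 2 - 1) = x ^ (q - 2) := by
    rw [← sq_rpow_half hx, sub_div, div_self two_ne_zero]
  rw [sq_rpow_half hx, hpow, Real.mul_rpow hc.le hy,
    ← rpow_sub_one_mul_self hc.le (by linarith : q / 2 ≠ 0)] at young
  have hdiv : x ^ (q - 2) * y ≤ (q / 2)⁻¹ * (c⁻¹ *
      ((q / 2 - 1) * x ^ q + c ^ (q / 2 - 1) * c * y ^ (q / 2))) := by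
    rw [le_inv_mul_iff₀ (by linarith), le_inv_mul_iff₀ hc]
    linarith
  have hX : 0 ≤ c⁻¹ * x ^ q := by positivity
  have hY : 0 ≤ c ^ (q / 2 - 1) * y ^ (q / 2) := by positivity
  refine hdiv.trans ?_
  rw [inv_mul_le_iff₀ (by linarith), mul_add, mul_add]
  have : c⁻¹ * (c ^ (q / 2 - 1) * c * y ^ (q / 2)) = c ^ (q / 2 - 1) * y ^ (q / 2) := by
    field_simp
  rw [this]
  nlinarith

-- Doob's inequality along a path: `x` is the running maximum so far and `y` the next value.
lemma doob_pathwise (hq : 1 ≤ q) (hx : 0 ≤ x) (hy : 0 ≤ y) :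
    (q - 1) * (x ⊔ y) ^ q + q * (x ^ (q - 1) * y) ≤
      (q - 1) * x ^ q + q * ((x ⊔ y) ^ (q - 1) * y) := by
  rcases le_total y x with h | h
  · rw [sup_eq_left.2 h]
  · rw [sup_eq_right.2 h, rpow_sub_one_mul_self hy (by linarith)]
    linarith [mul_rpow_sub_one_mul_le hq hx hy]

end Real

section Norm

variable {E : Type*} [NormedAddCommGroup E] [InnerProductSpace ℝ E] {q : ℝ}

lemma norm_mul_norm_add_sub_norm_le (a b : E) :
    ‖a‖ * (‖a + b‖ - ‖a‖) ≤ inner ℝ a b + ‖b‖ ^ 2 / 2 := by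
  linarith [norm_add_sq_real a b, two_mul_le_add_sq ‖a‖ ‖a + b‖]

lemma norm_rpow_sub_two_smul_le (a : E) (q : ℝ) : ‖‖a‖ ^ (q - 2) • a‖ ≤ ‖a‖ ^ (q - 1) := by
  rcases eq_or_ne a 0 with rfl | ha
  · simpa using Real.rpow_nonneg le_rfl _
  rw [norm_smul, Real.norm_of_nonneg (by positivity),
    ← Real.rpow_add_one (norm_ne_zero_iff.2 ha)]
  exact (congrArg (‖a‖ ^ ·) (by ring)).le

lemma norm_add_rpow_le_of_two_le (hq : 2 ≤ q) (a b : E) :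
    ‖a + b‖ ^ q ≤ ‖a‖ ^ q + q * (‖a‖ ^ (q - 2) * inner ℝ a b) +
      q ^ 2 * ((‖a‖ + ‖b‖) ^ (q - 2) * ‖b‖ ^ 2) := by
  set x := ‖a‖
  set y := ‖a + b‖
  set M := ‖a‖ + ‖b‖
  have hx : 0 ≤ x := norm_nonneg a
  have hy : 0 ≤ y := norm_nonneg (a + b)
  have hxM : x ≤ M := le_add_of_nonneg_right (norm_nonneg b)
  have hd : |y - x| ≤ ‖b‖ := by simpa using abs_norm_sub_norm_le (a + b) a
  have convexity : y ^ q - x ^ q ≤ q * (y ^ (q - 1) * (y - x)) :=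
    rpow_sub_rpow_le (by linarith) hy hx
  have derivative : (y ^ (q - 1) - x ^ (q - 1)) * (y - x) ≤
      (q - 1) * (M ^ (q - 2) * ‖b‖ ^ 2) := by
    have h := abs_rpow_sub_rpow_le (p := q - 1) (by linarith) hy hx (norm_add_le a b) hxM
    rw [sub_sub, one_add_one_eq_two] at h
    calc (y ^ (q - 1) - x ^ (q - 1)) * (y - x) ≤ |y ^ (q - 1) - x ^ (q - 1)| * |y - x| := by
          rw [← abs_mul]; exact le_abs_self _
      _ ≤ (q - 1) * (M ^ (q - 2) * |y - x|) * |y - x| := by gcongr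
      _ = (q - 1) * (M ^ (q - 2) * |y - x| ^ 2) := by ring
      _ ≤ (q - 1) * (M ^ (q - 2) * ‖b‖ ^ 2) := by
          have : 0 ≤ q - 1 := by linarith
          gcongr
  have linear : x ^ (q - 1) * (y - x) ≤
      x ^ (q - 2) * inner ℝ a b + M ^ (q - 2) * ‖b‖ ^ 2 / 2 := by
    have hpow : x ^ (q - 1) = x ^ (q - 2) * x := by
      rw [← rpow_sub_one_mul_self hx (by linarith), sub_sub, one_add_one_eq_two]
    calc x ^ (q - 1) * (y - x) = x ^ (q - 2) * (x * (y - x)) := by rw [hpow]; ring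
      _ ≤ x ^ (q - 2) * (inner ℝ a b + ‖b‖ ^ 2 / 2) := by
          gcongr; exact norm_mul_norm_add_sub_norm_le a b
      _ = x ^ (q - 2) * inner ℝ a b + x ^ (q - 2) * ‖b‖ ^ 2 / 2 := by ring
      _ ≤ x ^ (q - 2) * inner ℝ a b + M ^ (q - 2) * ‖b‖ ^ 2 / 2 := by gcongr
  have hrem : 0 ≤ M ^ (q - 2) * ‖b‖ ^ 2 := by positivity
  nlinarith [mul_le_mul_of_nonneg_left derivative (by linarith : 0 ≤ q),
    mul_le_mul_of_nonneg_left linear (by linarith : 0 ≤ q)]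

/-- The constant in the second-order Taylor bound for `‖·‖ ^ q` when `2 ≤ q`; no attempt is made to
optimize it. -/
noncomputable def remainderConst (q : ℝ) : ℝ := q ^ 2 * 2 ^ (q - 2)

lemma remainderConst_pos (hq : q ≠ 0) : 0 < remainderConst q := by
  unfold remainderConst
  positivity

lemma norm_add_rpow_le_add_remainderConst_mul (hq : 2 ≤ q) (a b : E) :
    ‖a + b‖ ^ q ≤ ‖a‖ ^ q + q * (‖a‖ ^ (q - 2) * inner ℝ a b) +
      remainderConst q * (‖a‖ ^ (q - 2) * ‖b‖ ^ 2 + ‖b‖ ^ q) := by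
  refine (norm_add_rpow_le_of_two_le hq a b).trans ?_
  rw [remainderConst, mul_assoc (q ^ 2), ← rpow_sub_two_mul_sq (norm_nonneg b) (by linarith),
    ← add_mul, ← mul_assoc (2 ^ (q - 2))]
  gcongr
  exact add_rpow_le_two_rpow_mul_add (by linarith) (norm_nonneg a) (norm_nonneg b)

lemma rpow_le_add_mul_sq_sub_sq {x y : ℝ} (hq : 0 < q) (hq2 : q ≤ 2) (hx : 0 < x) (hy : 0 ≤ y) :
    y ^ q ≤ x ^ q + q / 2 * (x ^ (q - 2) * (y ^ 2 - x ^ 2)) := by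
  have hpow : ∀ {z : ℝ}, 0 ≤ z → (z ^ q) ^ (2 / q) = z ^ 2 := fun {z} hz => by
    rw [← Real.rpow_mul hz, mul_div_cancel₀ _ (by linarith), Real.rpow_two]
  have hpow' : (x ^ q) ^ (2 / q - 1) = (x ^ (q - 2))⁻¹ := by
    rw [← Real.rpow_mul hx.le, ← Real.rpow_neg hx.le]
    congr 1
    field_simp
    ring
  -- the tangent inequality for the convex power `2 / q`, at `x ^ q` and `y ^ q`
  have young := mul_rpow_sub_one_mul_le (q := 2 / q) ((one_le_div hq).2 hq2)
    (Real.rpow_nonneg hx.le q) (Real.rpow_nonneg hy q)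
  rw [hpow hx.le, hpow hy, hpow'] at young
  have hw : 0 < x ^ (q - 2) := by positivity
  have := mul_le_mul_of_nonneg_left young (by positivity : 0 ≤ q / 2 * x ^ (q - 2))
  rw [← rpow_sub_two_mul_sq hx.le (by linarith : q ≠ 0)]
  field_simp at this ⊢
  linarith

lemma norm_add_rpow_le_of_norm_le (hq : 1 ≤ q) (hq2 : q ≤ 2) {a b : E} (h : ‖a‖ ≤ ‖b‖) :
    ‖a + b‖ ^ q ≤ ‖a‖ ^ q + q * (‖a‖ ^ (q - 2) * inner ℝ a b) + 6 * ‖b‖ ^ q := by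
  have hb : 0 ≤ ‖b‖ ^ q := by positivity
  have hsum : ‖a + b‖ ^ q ≤ 4 * ‖b‖ ^ q :=
    calc ‖a + b‖ ^ q ≤ (2 * ‖b‖) ^ q := by gcongr; linarith [norm_add_le a b]
      _ = 2 ^ q * ‖b‖ ^ q := Real.mul_rpow zero_le_two (norm_nonneg b)
      _ ≤ 2 ^ (2 : ℝ) * ‖b‖ ^ q := by gcongr; exact one_le_two
      _ = 4 * ‖b‖ ^ q := by norm_num
  have hinner : -(‖a‖ ^ (q - 2) * inner ℝ a b) ≤ ‖b‖ ^ q :=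
    calc -(‖a‖ ^ (q - 2) * inner ℝ a b) ≤ |inner ℝ (‖a‖ ^ (q - 2) • a) b| := by
          rw [← real_inner_smul_left]; exact neg_le_abs _
      _ ≤ ‖‖a‖ ^ (q - 2) • a‖ * ‖b‖ := abs_real_inner_le_norm _ _
      _ ≤ ‖a‖ ^ (q - 1) * ‖b‖ := by gcongr; exact norm_rpow_sub_two_smul_le a q
      _ ≤ ‖b‖ ^ (q - 1) * ‖b‖ := by gcongr
      _ = ‖b‖ ^ q := rpow_sub_one_mul_self (norm_nonneg b) (by linarith)
  have ha : 0 ≤ ‖a‖ ^ q := by positivity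
  nlinarith

lemma norm_add_rpow_le_of_le_two (hq : 1 ≤ q) (hq2 : q ≤ 2) (a b : E) :
    ‖a + b‖ ^ q ≤ ‖a‖ ^ q + q * (‖a‖ ^ (q - 2) * inner ℝ a b) + 6 * ‖b‖ ^ q := by
  rcases le_or_gt ‖a‖ ‖b‖ with h | h
  · exact norm_add_rpow_le_of_norm_le hq hq2 h
  have ha : 0 < ‖a‖ := (norm_nonneg b).trans_lt h
  have hrem : ‖a‖ ^ (q - 2) * ‖b‖ ^ 2 ≤ ‖b‖ ^ q := by
    rcases (norm_nonneg b).eq_or_lt with hb | hb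
    · rw [← hb, Real.zero_rpow (by linarith)]; simp
    calc ‖a‖ ^ (q - 2) * ‖b‖ ^ 2 ≤ ‖b‖ ^ (q - 2) * ‖b‖ ^ 2 :=
          mul_le_mul_of_nonneg_right
            (Real.rpow_le_rpow_of_nonpos hb h.le (by linarith)) (sq_nonneg _)
      _ = ‖b‖ ^ q := rpow_sub_two_mul_sq hb.le (by linarith)
  calc ‖a + b‖ ^ q
      ≤ ‖a‖ ^ q + q / 2 * (‖a‖ ^ (q - 2) * (‖a + b‖ ^ 2 - ‖a‖ ^ 2)) :=
        rpow_le_add_mul_sq_sub_sq (by linarith) hq2 ha (norm_nonneg _)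
    _ = ‖a‖ ^ q + q * (‖a‖ ^ (q - 2) * inner ℝ a b) + q / 2 * (‖a‖ ^ (q - 2) * ‖b‖ ^ 2) := by
        rw [norm_add_sq_real]; ring
    _ ≤ ‖a‖ ^ q + q * (‖a‖ ^ (q - 2) * inner ℝ a b) + 6 * ‖b‖ ^ q := by
        gcongr; linarith

end Norm

section Integrability

variable {Ω : Type*} {m0 : MeasurableSpace Ω} {μ : Measure Ω} {q s t : ℝ} {u v : Ω → ℝ}

lemma integrable_abs_rpow (hq : 0 < q) (hu : MemLp u (ENNReal.ofReal q) μ) :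
    Integrable (fun ω => |u ω| ^ q) μ := by
  simpa [ENNReal.toReal_ofReal hq.le] using
    hu.integrable_norm_rpow (by simpa using hq) ENNReal.ofReal_ne_top

lemma integrable_rpow (hq : 0 < q) (hu0 : 0 ≤ᵐ[μ] u) (hu : MemLp u (ENNReal.ofReal q) μ) :
    Integrable (fun ω => u ω ^ q) μ :=
  (integrable_abs_rpow hq hu).congr <| hu0.mono fun ω h => by
    simp only [abs_of_nonneg (show 0 ≤ u ω from h)]

lemma integrable_rpow_mul_rpow (hq : 0 < q) (hs : 0 ≤ s) (ht : 0 ≤ t) (hst : s + t = q)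
    (hu0 : 0 ≤ u) (hv0 : 0 ≤ v) (hu : MemLp u (ENNReal.ofReal q) μ)
    (hv : MemLp v (ENNReal.ofReal q) μ) : Integrable (fun ω => u ω ^ s * v ω ^ t) μ := by
  refine (integrable_abs_rpow hq (hu.sup hv)).mono'
    ((hu.1.aemeasurable.pow_const s).mul
      (hv.1.aemeasurable.pow_const t)).aestronglyMeasurable (ae_of_all _ fun ω => ?_)
  have hu0 : 0 ≤ u ω := hu0 ω
  have hv0 : 0 ≤ v ω := hv0 ω
  have hsup : 0 ≤ u ω ⊔ v ω := le_sup_of_le_left hu0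
  rw [Real.norm_of_nonneg (by positivity), Pi.sup_apply, abs_of_nonneg hsup, ← hst,
    Real.rpow_add_of_nonneg hsup hs ht]
  gcongr
  · exact le_sup_left
  · exact le_sup_right

end Integrability

section Martingale

variable {Ω E : Type*} {m0 : MeasurableSpace Ω} {μ : Measure Ω} {ℱ : Filtration ℕ m0}

lemma integral_mul_le_of_submartingale [SigmaFiniteFiltration μ ℱ] {f : ℕ → Ω → ℝ}
    (hf : Submartingale f ℱ μ) {i j : ℕ} (hij : i ≤ j) {Z : Ω → ℝ} (hZ0 : 0 ≤ Z)
    (hZ : StronglyMeasurable[ℱ i] Z) (hZi : Integrable (fun ω => Z ω * f i ω) μ)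
    (hZj : Integrable (fun ω => Z ω * f j ω) μ) :
    ∫ ω, Z ω * f i ω ∂μ ≤ ∫ ω, Z ω * f j ω ∂μ := by
  have pull : μ[fun ω => Z ω * f j ω | ℱ i] =ᵐ[μ] fun ω => Z ω * μ[f j | ℱ i] ω :=
    condExp_mul_of_stronglyMeasurable_left hZ hZj (hf.integrable j)
  rw [← integral_condExp (ℱ.le i) (f := fun ω => Z ω * f j ω)]
  refine integral_mono_ae hZi integrable_condExp ?_
  filter_upwards [pull, hf.ae_le_condExp hij] with ω hpull hsub
  rw [hpull]
  exact mul_le_mul_of_nonneg_left hsub (hZ0 ω)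

variable [NormedAddCommGroup E]

lemma submartingale_norm [NormedSpace ℝ E] [CompleteSpace E] {f : ℕ → Ω → E}
    (hf : Martingale f ℱ μ) : Submartingale (fun n ω => ‖f n ω‖) ℱ μ :=
  ⟨fun n => (hf.stronglyAdapted n).norm, fun i j hij => by
    filter_upwards [hf.2 i j hij, norm_condExp_le (m := ℱ i) (μ := μ) (f j)] with ω heq hle
    rwa [← heq], fun n => (hf.integrable n).norm⟩

variable [InnerProductSpace ℝ E] [CompleteSpace E]

lemma integral_inner_martingale_sub_eq_zero [SigmaFiniteFiltration μ ℱ] {f : ℕ → Ω → E}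
    (hf : Martingale f ℱ μ) {i j : ℕ} (hij : i ≤ j) {Z : Ω → E} (hZ : StronglyMeasurable[ℱ i] Z)
    (hint : Integrable (fun ω => inner ℝ (Z ω) (f j ω - f i ω)) μ) :
    ∫ ω, inner ℝ (Z ω) (f j ω - f i ω) ∂μ = 0 := by
  have pull : μ[fun ω => inner ℝ (Z ω) (f j ω - f i ω) | ℱ i] =ᵐ[μ]
      fun ω => inner ℝ (Z ω) (μ[f j - f i | ℱ i] ω) :=
    condExp_bilin_of_stronglyMeasurable_left (innerSL ℝ) hZ hint
      ((hf.integrable j).sub (hf.integrable i))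
  have hcond : μ[f j - f i | ℱ i] =ᵐ[μ] 0 := by
    filter_upwards [condExp_sub (hf.integrable j) (hf.integrable i) (ℱ i), hf.2 i j hij,
      hf.2 i i le_rfl] with ω hsub hj hi
    simp [hsub, hj, hi]
  rw [← integral_condExp (ℱ.le i)]
  refine integral_eq_zero_of_ae ?_
  filter_upwards [pull, hcond] with ω hpull hzero
  rw [hpull, hzero]
  simp

end Martingale

section Doob

variable {Ω : Type*} {m0 : MeasurableSpace Ω} {μ : Measure Ω} {ℱ : Filtration ℕ m0}
  {f : ℕ → Ω → ℝ} {q : ℝ}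

lemma stronglyMeasurable_partialSups (hf : StronglyAdapted ℱ f) (n : ℕ) :
    StronglyMeasurable[ℱ n] (partialSups f n) := by
  induction n with
  | zero => simpa using hf 0
  | succ n ih =>
    rw [partialSups_add_one]
    have hmono : StronglyMeasurable[ℱ (n + 1)] (partialSups f n) := ih.mono (ℱ.mono n.le_succ)
    exact continuous_sup.comp_stronglyMeasurable (hmono.prodMk (hf (n + 1)))

lemma memLp_partialSups {p : ENNReal} (hf : ∀ n, MemLp (f n) p μ) (n : ℕ) :
    MemLp (partialSups f n) p μ := by
  induction n with
  | zero => simpa using hf 0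
  | succ n ih => rw [partialSups_add_one]; exact ih.sup (hf (n + 1))

lemma partialSups_nonneg (hf : 0 ≤ f) (n : ℕ) : 0 ≤ partialSups f n :=
  (hf n).trans (le_partialSups f n)

lemma integrable_rpow_sub_one_mul {u v : Ω → ℝ} (hq : 1 ≤ q) (hu0 : 0 ≤ u) (hv0 : 0 ≤ v)
    (hu : MemLp u (ENNReal.ofReal q) μ) (hv : MemLp v (ENNReal.ofReal q) μ) :
    Integrable (fun ω => u ω ^ (q - 1) * v ω) μ := by
  simpa using integrable_rpow_mul_rpow (by linarith) (sub_nonneg.2 hq) zero_le_one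
    (sub_add_cancel q 1) hu0 hv0 hu hv

lemma integral_partialSups_rpow_le_integral_mul [SigmaFiniteFiltration μ ℱ] (hq : 1 ≤ q)
    (hf : Submartingale f ℱ μ) (hf0 : 0 ≤ f) (hLp : ∀ n, MemLp (f n) (ENNReal.ofReal q) μ)
    (n : ℕ) :
    (q - 1) * ∫ ω, partialSups f n ω ^ q ∂μ ≤
      q * ∫ ω, partialSups f n ω ^ (q - 1) * f n ω ∂μ := by
  have hM0 := partialSups_nonneg hf0
  have hMLp := memLp_partialSups hLp
  have hM : ∀ n, Integrable (fun ω => partialSups f n ω ^ q) μ := fun n =>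
    integrable_rpow (by linarith) (ae_of_all _ (hM0 n)) (hMLp n)
  have hMf : ∀ m n, Integrable (fun ω => partialSups f m ω ^ (q - 1) * f n ω) μ := fun m n =>
    integrable_rpow_sub_one_mul hq (hM0 m) (hf0 n) (hMLp m) (hLp n)
  induction n with
  | zero =>
    simp only [partialSups_zero]
    have hpow : ∀ ω, f 0 ω ^ (q - 1) * f 0 ω = f 0 ω ^ q := fun ω =>
      rpow_sub_one_mul_self (hf0 0 ω) (by linarith)
    simp only [hpow]
    have : 0 ≤ ∫ ω, f 0 ω ^ q ∂μ := integral_nonneg fun ω => Real.rpow_nonneg (hf0 0 ω) q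
    linarith
  | succ n ih =>
    have step : ∫ ω, partialSups f n ω ^ (q - 1) * f n ω ∂μ ≤
        ∫ ω, partialSups f n ω ^ (q - 1) * f (n + 1) ω ∂μ :=
      integral_mul_le_of_submartingale hf n.le_succ
        (fun ω => Real.rpow_nonneg (hM0 n ω) _)
        ((stronglyMeasurable_partialSups hf.stronglyAdapted n).measurable.pow_const
          _).stronglyMeasurable (hMf n n) (hMf n (n + 1))
    have pathwise : ∫ ω, ((q - 1) * partialSups f (n + 1) ω ^ q +
          q * (partialSups f n ω ^ (q - 1) * f (n + 1) ω)) ∂μ ≤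
        ∫ ω, ((q - 1) * partialSups f n ω ^ q +
          q * (partialSups f (n + 1) ω ^ (q - 1) * f (n + 1) ω)) ∂μ :=
      integral_mono (((hM _).const_mul _).add ((hMf _ _).const_mul _))
        (((hM _).const_mul _).add ((hMf _ _).const_mul _)) fun ω => by
          rw [partialSups_add_one]; exact doob_pathwise hq (hM0 n ω) (hf0 (n + 1) ω)
    rw [integral_add ((hM _).const_mul _) ((hMf _ _).const_mul _),
      integral_add ((hM _).const_mul _) ((hMf _ _).const_mul _)] at pathwise
    simp only [integral_const_mul] at pathwise
    have := mul_le_mul_of_nonneg_left step (by linarith : 0 ≤ q)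
    linarith

lemma integral_partialSups_rpow_le [SigmaFiniteFiltration μ ℱ] (hq : 1 < q)
    (hf : Submartingale f ℱ μ) (hf0 : 0 ≤ f) (hLp : ∀ n, MemLp (f n) (ENNReal.ofReal q) μ)
    (n : ℕ) :
    ∫ ω, partialSups f n ω ^ q ∂μ ≤ (q / (q - 1)) ^ q * ∫ ω, f n ω ^ q ∂μ := by
  have hM0 := partialSups_nonneg hf0 n
  have hMLp := memLp_partialSups hLp n
  have hM := integrable_rpow (by linarith) (ae_of_all _ hM0) hMLp
  have hfq := integrable_rpow (by linarith) (ae_of_all _ (hf0 n)) (hLp n)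
  set r := q / (q - 1)
  have hr : 0 ≤ r := div_nonneg (by linarith) (by linarith)
  have young : ∫ ω, r * q * (partialSups f n ω ^ (q - 1) * f n ω) ∂μ ≤
      ∫ ω, ((q - 1) * partialSups f n ω ^ q + r ^ q * f n ω ^ q) ∂μ :=
    integral_mono ((integrable_rpow_sub_one_mul hq.le hM0 (hf0 n) hMLp (hLp n)).const_mul _)
      ((hM.const_mul _).add (hfq.const_mul _)) fun ω => by
        have := mul_rpow_sub_one_mul_le hq.le (hM0 ω) (mul_nonneg hr (hf0 n ω))
        rw [Real.mul_rpow hr (hf0 n ω)] at this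
        linarith
  rw [integral_add (hM.const_mul _) (hfq.const_mul _)] at young
  simp only [integral_const_mul] at young
  have maximal := mul_le_mul_of_nonneg_left
    (integral_partialSups_rpow_le_integral_mul hq.le hf hf0 hLp n) hr
  have hrq : r * (q - 1) = q := div_mul_cancel₀ q (by linarith)
  rw [← mul_assoc, hrq, ← mul_assoc] at maximal
  linarith

end Doob

section Moments

variable {Ω E : Type*} {m0 : MeasurableSpace Ω} {μ : Measure Ω} {ℱ : Filtration ℕ m0}
  [NormedAddCommGroup E] {f : ℕ → Ω → E} {q : ℝ}

lemma integrable_norm_rpow_of_memLp (hq : 0 < q) {g : Ω → E} (hg : MemLp g (ENNReal.ofReal q) μ) :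
    Integrable (fun ω => ‖g ω‖ ^ q) μ :=
  integrable_rpow hq (ae_of_all _ fun _ => norm_nonneg _) hg.norm

lemma memLp_norm_sq {g : Ω → E} (hg : MemLp g (ENNReal.ofReal q) μ) :
    MemLp (fun ω => ‖g ω‖ ^ 2) (ENNReal.ofReal (q / 2)) μ := by
  have h := hg.norm_rpow_div 2
  rw [← ENNReal.ofReal_ofNat, ← ENNReal.ofReal_div_of_pos two_pos] at h
  simpa using h

lemma integrable_norm_rpow_sub_two_mul_norm_sq (hq : 2 ≤ q) {g h : Ω → E}
    (hg : MemLp g (ENNReal.ofReal q) μ) (hh : MemLp h (ENNReal.ofReal q) μ) :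
    Integrable (fun ω => ‖g ω‖ ^ (q - 2) * ‖h ω‖ ^ 2) μ := by
  simpa using integrable_rpow_mul_rpow (by linarith) (sub_nonneg.2 hq) zero_le_two
    (sub_add_cancel q 2) (fun _ => norm_nonneg _) (fun _ => norm_nonneg _) hg.norm hh.norm

variable [InnerProductSpace ℝ E]

lemma integrable_norm_rpow_sub_two_mul_inner (hq : 1 ≤ q) {g h : Ω → E}
    (hg : MemLp g (ENNReal.ofReal q) μ) (hh : MemLp h (ENNReal.ofReal q) μ) :
    Integrable (fun ω => ‖g ω‖ ^ (q - 2) * inner ℝ (g ω) (h ω)) μ := by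
  refine (integrable_rpow_sub_one_mul hq (fun _ => norm_nonneg _) (fun _ => norm_nonneg _)
    hg.norm hh.norm).mono' ((hg.1.norm.aemeasurable.pow_const
      _).aestronglyMeasurable.mul (hg.1.inner hh.1)) (ae_of_all _ fun ω => ?_)
  rw [← real_inner_smul_left]
  exact (norm_inner_le_norm _ _).trans
    (mul_le_mul_of_nonneg_right (norm_rpow_sub_two_smul_le _ q) (norm_nonneg _))

variable [CompleteSpace E] [SigmaFiniteFiltration μ ℱ]

lemma integral_norm_rpow_sub_two_mul_inner_eq_zero (hq : 1 ≤ q) (hf : Martingale f ℱ μ)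
    (hLp : ∀ n, MemLp (f n) (ENNReal.ofReal q) μ) (n : ℕ) :
    ∫ ω, ‖f n ω‖ ^ (q - 2) * inner ℝ (f n ω) (f (n + 1) ω - f n ω) ∂μ = 0 := by
  have hint := integrable_norm_rpow_sub_two_mul_inner hq (hLp n) ((hLp (n + 1)).sub (hLp n))
  have hmeas : StronglyMeasurable[ℱ n] fun ω => ‖f n ω‖ ^ (q - 2) • f n ω :=
    ((hf.stronglyAdapted n).norm.measurable.pow_const _).stronglyMeasurable.smul
      (hf.stronglyAdapted n)
  simp only [← real_inner_smul_left, Pi.sub_apply] at hint ⊢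
  exact integral_inner_martingale_sub_eq_zero hf n.le_succ hmeas hint

lemma integral_norm_rpow_le_add_sum_remainder (hq : 1 ≤ q) (hf : Martingale f ℱ μ)
    (hLp : ∀ n, MemLp (f n) (ENNReal.ofReal q) μ) {R : E → E → ℝ}
    (hR : ∀ a b, ‖a + b‖ ^ q ≤ ‖a‖ ^ q + q * (‖a‖ ^ (q - 2) * inner ℝ a b) + R a b)
    (hRint : ∀ k, Integrable (fun ω => R (f k ω) (f (k + 1) ω - f k ω)) μ) (n : ℕ) :
    ∫ ω, ‖f n ω‖ ^ q ∂μ ≤ ∫ ω, ‖f 0 ω‖ ^ q ∂μ +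
      ∑ k ∈ Finset.range n, ∫ ω, R (f k ω) (f (k + 1) ω - f k ω) ∂μ := by
  have hfq : ∀ k, Integrable (fun ω => ‖f k ω‖ ^ q) μ := fun k =>
    integrable_norm_rpow_of_memLp (by linarith) (hLp k)
  induction n with
  | zero => simp
  | succ n ih =>
    have hinner : Integrable (fun ω => q * (‖f n ω‖ ^ (q - 2) *
        inner ℝ (f n ω) (f (n + 1) ω - f n ω))) μ :=
      (integrable_norm_rpow_sub_two_mul_inner hq (hLp n) ((hLp (n + 1)).sub (hLp n))).const_mul q
    have hlinear : Integrable (fun ω => ‖f n ω‖ ^ q + q * (‖f n ω‖ ^ (q - 2) *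
        inner ℝ (f n ω) (f (n + 1) ω - f n ω))) μ := (hfq n).add hinner
    have step : ∫ ω, ‖f (n + 1) ω‖ ^ q ∂μ ≤ ∫ ω, (‖f n ω‖ ^ q +
        q * (‖f n ω‖ ^ (q - 2) * inner ℝ (f n ω) (f (n + 1) ω - f n ω)) +
        R (f n ω) (f (n + 1) ω - f n ω)) ∂μ :=
      integral_mono (hfq _) (hlinear.add (hRint n)) fun ω => by
        simpa using hR (f n ω) (f (n + 1) ω - f n ω)
    rw [integral_add hlinear (hRint n), integral_add (hfq n) hinner,
      integral_const_mul, integral_norm_rpow_sub_two_mul_inner_eq_zero hq hf hLp n] at step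
    rw [Finset.sum_range_succ]
    linarith

lemma integral_norm_rpow_le_of_le_two (hq : 1 ≤ q) (hq2 : q ≤ 2) (hf : Martingale f ℱ μ)
    (hLp : ∀ n, MemLp (f n) (ENNReal.ofReal q) μ) (n : ℕ) :
    ∫ ω, ‖f n ω‖ ^ q ∂μ ≤ ∫ ω, ‖f 0 ω‖ ^ q ∂μ +
      6 * ∑ k ∈ Finset.range n, ∫ ω, ‖f (k + 1) ω - f k ω‖ ^ q ∂μ := by
  simp only [Finset.mul_sum, ← integral_const_mul]
  exact integral_norm_rpow_le_add_sum_remainder (R := fun _ b => 6 * ‖b‖ ^ q) hq hf hLp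
    (norm_add_rpow_le_of_le_two hq hq2) (fun k => (integrable_norm_rpow_of_memLp (by linarith)
      ((hLp (k + 1)).sub (hLp k))).const_mul 6) n

end Moments

section QuadraticVariation

variable {Ω E : Type*} {m0 : MeasurableSpace Ω} {μ : Measure Ω} {ℱ : Filtration ℕ m0}
  [NormedAddCommGroup E] {f : ℕ → Ω → E} {q : ℝ}

/-- The predictable quadratic variation of `f` at time `n`, i.e. the square of its conditional
square function. Its increment from `k` to `k + 1` is `ℱ k`-measurable. -/
noncomputable def predictableQuadVar (f : ℕ → Ω → E) (ℱ : Filtration ℕ m0) (μ : Measure Ω)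
    (n : ℕ) (ω : Ω) : ℝ :=
  ∑ k ∈ Finset.range n, μ[fun ω' => ‖f (k + 1) ω' - f k ω'‖ ^ 2 | ℱ k] ω

lemma condExp_norm_sq_nonneg (m : MeasurableSpace Ω) (g : Ω → E) :
    0 ≤ᵐ[μ] μ[fun ω => ‖g ω‖ ^ 2 | m] :=
  condExp_nonneg (ae_of_all _ fun _ => sq_nonneg _)

lemma predictableQuadVar_nonneg (n : ℕ) : 0 ≤ᵐ[μ] predictableQuadVar f ℱ μ n := by
  filter_upwards [ae_all_iff.2 fun k => condExp_norm_sq_nonneg (μ := μ) (ℱ k)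
    fun ω => f (k + 1) ω - f k ω] with ω h
  exact Finset.sum_nonneg fun k _ => h k

lemma memLp_predictableQuadVar (hq : 2 ≤ q) (hLp : ∀ n, MemLp (f n) (ENNReal.ofReal q) μ)
    (n : ℕ) : MemLp (predictableQuadVar f ℱ μ n) (ENNReal.ofReal (q / 2)) μ :=
  memLp_finsetSum _ fun k _ => (memLp_norm_sq ((hLp (k + 1)).sub (hLp k))).condExp
    (by rw [ENNReal.one_le_ofReal]; linarith)

lemma sum_rpow_sub_two_mul_condExp_le {c : ℝ} (hq : 2 ≤ q) (hc : 0 < c) (n : ℕ) :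
    ∀ᵐ ω ∂μ, ∑ k ∈ Finset.range n, ‖f k ω‖ ^ (q - 2) *
        μ[fun ω' => ‖f (k + 1) ω' - f k ω'‖ ^ 2 | ℱ k] ω ≤
      c⁻¹ * partialSups (fun k ω => ‖f k ω‖) n ω ^ q +
        c ^ (q / 2 - 1) * predictableQuadVar f ℱ μ n ω ^ (q / 2) := by
  filter_upwards [ae_all_iff.2 fun k => condExp_norm_sq_nonneg (μ := μ) (ℱ k)
    fun ω => f (k + 1) ω - f k ω, predictableQuadVar_nonneg (f := f) (ℱ := ℱ) n] with ω hD hV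
  refine le_trans ?_ (rpow_sub_two_mul_le hq hc
    (partialSups_nonneg (fun _ _ => norm_nonneg _) n ω) hV)
  rw [predictableQuadVar, Finset.mul_sum]
  refine Finset.sum_le_sum fun k hk => mul_le_mul_of_nonneg_right ?_ (hD k)
  exact Real.rpow_le_rpow (norm_nonneg _)
    (le_partialSups_of_le (fun k ω => ‖f k ω‖) (Finset.mem_range.1 hk).le ω) (sub_nonneg.2 hq)

lemma condExp_rpow_sub_two_mul_norm_sq [IsFiniteMeasure μ] (hq : 2 ≤ q)
    (hf : StronglyAdapted ℱ f) (hLp : ∀ n, MemLp (f n) (ENNReal.ofReal q) μ) (n : ℕ) :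
    μ[fun ω => ‖f n ω‖ ^ (q - 2) * ‖f (n + 1) ω - f n ω‖ ^ 2 | ℱ n] =ᵐ[μ]
      fun ω => ‖f n ω‖ ^ (q - 2) * μ[fun ω' => ‖f (n + 1) ω' - f n ω'‖ ^ 2 | ℱ n] ω :=
  condExp_mul_of_stronglyMeasurable_left
    ((hf n).norm.measurable.pow_const _).stronglyMeasurable
    (integrable_norm_rpow_sub_two_mul_norm_sq hq (hLp n) ((hLp (n + 1)).sub (hLp n)))
    ((memLp_norm_sq ((hLp (n + 1)).sub (hLp n))).integrable
      (by rw [ENNReal.one_le_ofReal]; linarith))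

lemma sum_integral_rpow_sub_two_mul_norm_sq_le [IsFiniteMeasure μ] {c : ℝ} (hq : 2 ≤ q)
    (hc : 0 < c) (hf : StronglyAdapted ℱ f) (hLp : ∀ n, MemLp (f n) (ENNReal.ofReal q) μ)
    (n : ℕ) :
    ∑ k ∈ Finset.range n, ∫ ω, ‖f k ω‖ ^ (q - 2) * ‖f (k + 1) ω - f k ω‖ ^ 2 ∂μ ≤
      c⁻¹ * ∫ ω, partialSups (fun k ω => ‖f k ω‖) n ω ^ q ∂μ +
        c ^ (q / 2 - 1) * ∫ ω, predictableQuadVar f ℱ μ n ω ^ (q / 2) ∂μ := by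
  have pull := condExp_rpow_sub_two_mul_norm_sq hq hf hLp
  have hM : Integrable (fun ω => partialSups (fun k ω => ‖f k ω‖) n ω ^ q) μ :=
    integrable_rpow (by linarith)
      (ae_of_all _ (partialSups_nonneg (fun _ _ => norm_nonneg _) n))
      (memLp_partialSups (fun k => (hLp k).norm) n)
  have hV : Integrable (fun ω => predictableQuadVar f ℱ μ n ω ^ (q / 2)) μ :=
    integrable_rpow (by linarith) (predictableQuadVar_nonneg n)
      (memLp_predictableQuadVar hq hLp n)
  calc ∑ k ∈ Finset.range n, ∫ ω, ‖f k ω‖ ^ (q - 2) * ‖f (k + 1) ω - f k ω‖ ^ 2 ∂μ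
      = ∑ k ∈ Finset.range n, ∫ ω, ‖f k ω‖ ^ (q - 2) *
          μ[fun ω' => ‖f (k + 1) ω' - f k ω'‖ ^ 2 | ℱ k] ω ∂μ :=
        Finset.sum_congr rfl fun k _ => by
          rw [← integral_congr_ae (pull k), integral_condExp (ℱ.le k)]
    _ = ∫ ω, ∑ k ∈ Finset.range n, ‖f k ω‖ ^ (q - 2) *
          μ[fun ω' => ‖f (k + 1) ω' - f k ω'‖ ^ 2 | ℱ k] ω ∂μ :=
        (integral_finsetSum _ fun k _ => integrable_condExp.congr (pull k)).symm
    _ ≤ ∫ ω, (c⁻¹ * partialSups (fun k ω => ‖f k ω‖) n ω ^ q +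
          c ^ (q / 2 - 1) * predictableQuadVar f ℱ μ n ω ^ (q / 2)) ∂μ :=
        integral_mono_ae (integrable_finsetSum _ fun k _ => integrable_condExp.congr (pull k))
          ((hM.const_mul _).add (hV.const_mul _)) (sum_rpow_sub_two_mul_condExp_le hq hc n)
    _ = _ := by
        rw [integral_add (hM.const_mul _) (hV.const_mul _), integral_const_mul,
          integral_const_mul]

end QuadraticVariation

section Burkholder

variable {Ω E : Type*} {m0 : MeasurableSpace Ω} {μ : Measure Ω} [IsFiniteMeasure μ]
  {ℱ : Filtration ℕ m0} [NormedAddCommGroup E] {q : ℝ}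

/-- The weight in Young's inequality that makes the contribution of the running maximum to the
bound on `∫ ‖f n‖ ^ q` at most half of that integral. -/
noncomputable def absorptionWeight (q : ℝ) : ℝ := 2 * remainderConst q * (q / (q - 1)) ^ q

/-- The constant `K_q` of Burkholder's inequality; no attempt is made to optimize it. -/
noncomputable def burkholderConst (q : ℝ) : ℝ :=
  if q ≤ 2 then 6 else 2 * remainderConst q * (absorptionWeight q ^ (q / 2 - 1) + 1)

lemma absorptionWeight_pos (hq : 1 < q) : 0 < absorptionWeight q := by
  have := remainderConst_pos (by linarith : q ≠ 0)
  have : 0 < q / (q - 1) := div_pos (by linarith) (by linarith)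
  unfold absorptionWeight
  positivity

lemma burkholderConst_pos (q : ℝ) : 0 < burkholderConst q := by
  unfold burkholderConst
  split_ifs with hq
  · norm_num
  · have := remainderConst_pos (by linarith : q ≠ 0)
    have := absorptionWeight_pos (by linarith : 1 < q)
    positivity

lemma integral_norm_rpow_le_of_two_le [InnerProductSpace ℝ E] [CompleteSpace E] {f : ℕ → Ω → E}
    (hq : 2 ≤ q) (hf : Martingale f ℱ μ) (hLp : ∀ n, MemLp (f n) (ENNReal.ofReal q) μ) (n : ℕ) :
    ∫ ω, ‖f n ω‖ ^ q ∂μ ≤ 2 * ∫ ω, ‖f 0 ω‖ ^ q ∂μ + 2 * remainderConst q *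
      (absorptionWeight q ^ (q / 2 - 1) * ∫ ω, predictableQuadVar f ℱ μ n ω ^ (q / 2) ∂μ +
        ∑ k ∈ Finset.range n, ∫ ω, ‖f (k + 1) ω - f k ω‖ ^ q ∂μ) := by
  have hC : 0 < remainderConst q := remainderConst_pos (by linarith)
  have hw : 0 < absorptionWeight q := absorptionWeight_pos (by linarith)
  have hΔ : ∀ k, Integrable (fun ω => ‖f (k + 1) ω - f k ω‖ ^ q) μ := fun k =>
    integrable_norm_rpow_of_memLp (by linarith) ((hLp (k + 1)).sub (hLp k))
  have hcross : ∀ k, Integrable (fun ω => ‖f k ω‖ ^ (q - 2) * ‖f (k + 1) ω - f k ω‖ ^ 2) μ :=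
    fun k => integrable_norm_rpow_sub_two_mul_norm_sq hq (hLp k) ((hLp (k + 1)).sub (hLp k))
  have telescoped := integral_norm_rpow_le_add_sum_remainder (by linarith) hf hLp
    (norm_add_rpow_le_add_remainderConst_mul hq) (fun k => ((hcross k).add (hΔ k)).const_mul _) n
  simp only [integral_const_mul, integral_add (hcross _) (hΔ _), ← Finset.mul_sum,
    Finset.sum_add_distrib] at telescoped
  have conditioned := sum_integral_rpow_sub_two_mul_norm_sq_le hq hw hf.stronglyAdapted hLp n
  have doob := integral_partialSups_rpow_le (by linarith : 1 < q) (submartingale_norm hf)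
    (fun _ _ => norm_nonneg _) (fun k => (hLp k).norm) n
  have absorb : remainderConst q * ((absorptionWeight q)⁻¹ *
      ∫ ω, partialSups (fun k ω => ‖f k ω‖) n ω ^ q ∂μ) ≤ 2⁻¹ * ∫ ω, ‖f n ω‖ ^ q ∂μ :=
    calc _ ≤ remainderConst q * ((absorptionWeight q)⁻¹ *
          ((q / (q - 1)) ^ q * ∫ ω, ‖f n ω‖ ^ q ∂μ)) := by gcongr
      _ = 2⁻¹ * ∫ ω, ‖f n ω‖ ^ q ∂μ := by
        have hD : (q / (q - 1)) ^ q ≠ 0 := right_ne_zero_of_mul hw.ne'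
        rw [absorptionWeight]
        field_simp
  linarith [mul_le_mul_of_nonneg_left conditioned hC.le]

lemma martingale_sum_range [NormedSpace ℝ E] [CompleteSpace E] {X : ℕ → Ω → E}
    (hX : ∀ k, StronglyMeasurable[ℱ (k + 1)] (X k)) (hint : ∀ k, Integrable (X k) μ)
    (hcond : ∀ k, μ[X k | ℱ k] =ᵐ[μ] 0) :
    Martingale (fun n ω => ∑ k ∈ Finset.range n, X k ω) ℱ μ := by
  refine martingale_of_condExp_sub_eq_zero_nat (fun n => ?_)
    (fun n => integrable_finsetSum _ fun k _ => hint k) fun n => ?_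
  · exact Finset.stronglyMeasurable_fun_sum _ fun k hk =>
      (hX k).mono (ℱ.mono (Finset.mem_range.1 hk))
  · convert hcond n using 2
    ext ω
    simp [Finset.sum_range_succ]

variable [InnerProductSpace ℝ E] [CompleteSpace E] {X : ℕ → Ω → E}

lemma integral_norm_sum_rpow_le (hq : 1 ≤ q) (hX : ∀ k, StronglyMeasurable[ℱ (k + 1)] (X k))
    (hcond : ∀ k, μ[X k | ℱ k] =ᵐ[μ] 0) (hLp : ∀ k, MemLp (X k) (ENNReal.ofReal q) μ) (n : ℕ) :
    ∫ ω, ‖∑ k ∈ Finset.range n, X k ω‖ ^ q ∂μ ≤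
      burkholderConst q * ((∫ ω, (∑ k ∈ Finset.range n,
        μ[fun ω' => ‖X k ω'‖ ^ 2 | ℱ k] ω) ^ (q / 2) ∂μ) +
          ∑ k ∈ Finset.range n, ∫ ω, ‖X k ω‖ ^ q ∂μ) := by
  let S : ℕ → Ω → E := fun n ω => ∑ k ∈ Finset.range n, X k ω
  have hS : Martingale S ℱ μ := martingale_sum_range hX
    (fun k => (hLp k).integrable (by rwa [ENNReal.one_le_ofReal])) hcond
  have hSLp : ∀ n, MemLp (S n) (ENNReal.ofReal q) μ := fun n => memLp_finsetSum _ fun k _ => hLp k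
  have hS0 : ∫ ω, ‖S 0 ω‖ ^ q ∂μ = 0 := by simp [S, Real.zero_rpow (by linarith : q ≠ 0)]
  have hΔ : ∀ k ω, S (k + 1) ω - S k ω = X k ω := fun k ω => Finset.sum_range_succ_sub_sum _
  have hV : ∀ ω, ∑ k ∈ Finset.range n, μ[fun ω' => ‖X k ω'‖ ^ 2 | ℱ k] ω =
      predictableQuadVar S ℱ μ n ω := fun ω => by simp only [predictableQuadVar, hΔ]
  have hV0 : 0 ≤ ∫ ω, predictableQuadVar S ℱ μ n ω ^ (q / 2) ∂μ := integral_nonneg_of_ae <|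
    (predictableQuadVar_nonneg n).mono fun _ h => Real.rpow_nonneg h _
  have hX0 : 0 ≤ ∑ k ∈ Finset.range n, ∫ ω, ‖X k ω‖ ^ q ∂μ :=
    Finset.sum_nonneg fun k _ => integral_nonneg fun _ => by positivity
  simp only [hV]
  rw [burkholderConst]
  split_ifs with hq2
  · have bound := integral_norm_rpow_le_of_le_two hq hq2 hS hSLp n
    simp only [hS0, hΔ] at bound
    linarith
  · have bound := integral_norm_rpow_le_of_two_le (le_of_not_ge hq2) hS hSLp n
    simp only [hS0, hΔ, mul_zero, zero_add] at bound
    refine bound.trans ?_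
    have hC := remainderConst_pos (by linarith : q ≠ 0)
    have hw := Real.rpow_nonneg (absorptionWeight_pos (by linarith : 1 < q)).le (q / 2 - 1)
    rw [mul_assoc (2 * remainderConst q)]
    gcongr
    linarith [mul_nonneg hw hX0]

theorem burkholder_inequality_general {n : ℕ} (hq : 1 ≤ q)
    (hX : ∀ k ∈ Finset.range n, StronglyMeasurable[ℱ (k + 1)] (X k))
    (hcond : ∀ k ∈ Finset.range n, μ[X k | ℱ k] =ᵐ[μ] 0)
    (hint : ∀ k ∈ Finset.range n, Integrable (fun ω => ‖X k ω‖ ^ q) μ) :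
    ∫ ω, ‖∑ k ∈ Finset.range n, X k ω‖ ^ q ∂μ ≤
      burkholderConst q * ((∫ ω, (∑ k ∈ Finset.range n,
        μ[fun ω' => ‖X k ω'‖ ^ 2 | ℱ k] ω) ^ (q / 2) ∂μ) +
          ∑ k ∈ Finset.range n, ∫ ω, ‖X k ω‖ ^ q ∂μ) := by
  let Y : ℕ → Ω → E := fun k => if k ∈ Finset.range n then X k else 0
  have hYX : ∀ k ∈ Finset.range n, Y k = X k := fun k hk => if_pos hk
  have hY : ∀ k, StronglyMeasurable[ℱ (k + 1)] (Y k) := fun k => by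
    by_cases hk : k ∈ Finset.range n
    · simpa only [Y, if_pos hk] using hX k hk
    · simpa only [Y, if_neg hk] using stronglyMeasurable_zero
  have hYcond : ∀ k, μ[Y k | ℱ k] =ᵐ[μ] 0 := fun k => by
    by_cases hk : k ∈ Finset.range n
    · simpa only [Y, if_pos hk] using hcond k hk
    · simp only [Y, if_neg hk, condExp_zero]; rfl
  have hYLp : ∀ k, MemLp (Y k) (ENNReal.ofReal q) μ := fun k => by
    by_cases hk : k ∈ Finset.range n
    · have hq0 : 0 < q := by linarith
      rw [hYX k hk, ← integrable_norm_rpow_iff ((hX k hk).mono (ℱ.le _)).aestronglyMeasurable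
        (by simpa using hq0) ENNReal.ofReal_ne_top, ENNReal.toReal_ofReal hq0.le]
      exact hint k hk
    · simpa only [Y, if_neg hk] using MemLp.zero
  have hsum : ∀ ω, ∑ k ∈ Finset.range n, Y k ω = ∑ k ∈ Finset.range n, X k ω := fun ω =>
    Finset.sum_congr rfl fun k hk => by rw [hYX k hk]
  have hvar : ∀ ω, ∑ k ∈ Finset.range n, μ[fun ω' => ‖Y k ω'‖ ^ 2 | ℱ k] ω =
      ∑ k ∈ Finset.range n, μ[fun ω' => ‖X k ω'‖ ^ 2 | ℱ k] ω := fun ω =>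
    Finset.sum_congr rfl fun k hk => by rw [hYX k hk]
  have hmom : ∑ k ∈ Finset.range n, ∫ ω, ‖Y k ω‖ ^ q ∂μ =
      ∑ k ∈ Finset.range n, ∫ ω, ‖X k ω‖ ^ q ∂μ :=
    Finset.sum_congr rfl fun k hk => by rw [hYX k hk]
  simpa only [hsum, hvar, hmom] using integral_norm_sum_rpow_le hq hY hYcond hYLp n

end Burkholder

/-- Burkholder's inequality for complex martingale difference sequences: for every `q > 1`
there is a constant `K_q` depending only on `q` such that, for any probability space, any
increasing filtration `F`, and any complex martingale difference sequence `X₀, …, X_{n-1}`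
(with `X k` being `F (k+1)`-measurable and `E[X k | F k] = 0`) having finite `q`-th moments,
`E|∑ X_k|^q ≤ K_q (E(∑ E[|X_k|²|F_{k-1}])^{q/2} + ∑ E|X_k|^q)`. -/
theorem burkholder_inequality (q : ℝ) (hq : 1 < q) :
    ∃ K : ℝ, 0 < K ∧
      ∀ (Ω : Type) (m0 : MeasurableSpace Ω) (P : Measure Ω), IsProbabilityMeasure P →
        ∀ (n : ℕ) (F : ℕ → MeasurableSpace Ω) (X : ℕ → Ω → ℂ),
          Monotone F → (∀ k, F k ≤ m0) →
          (∀ k ∈ Finset.range n, StronglyMeasurable[F (k + 1)] (X k)) →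
          (∀ k ∈ Finset.range n, P[X k | F k] =ᵐ[P] 0) →
          (∀ k ∈ Finset.range n, Integrable (fun ω => ‖X k ω‖ ^ q) P) →
          ∫ ω, ‖∑ k ∈ Finset.range n, X k ω‖ ^ q ∂P ≤
            K * ((∫ ω, (∑ k ∈ Finset.range n,
                    (P[fun ω' => ‖X k ω'‖ ^ 2 | F k]) ω) ^ (q / 2) ∂P) +
                 ∑ k ∈ Finset.range n, ∫ ω, ‖X k ω‖ ^ q ∂P) :=
  ⟨burkholderConst q, burkholderConst_pos q, fun _ _ _ _ _ F _ hmono hle hX hcond hint =>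
    burkholder_inequality_general (ℱ := ⟨F, hmono, hle⟩) hq.le hX hcond hint⟩
end

section
/- Suppose that for each n, (Y_{n,1}, Y_{n,2}, …, Y_{n,r_n}) is a real martingale difference sequence with respect to an increasing filtration (F_{n,j})_{j=0}^{r_n} (i.e., Y_{n,j} is F_{n,j}-measurable and E[Y_{n,j} | F_{n,j−1}] = 0) with E[Y_{n,j}²] < ∞ for all j. Assume that (i) ∑_{j=1}^{r_n} E[Y_{n,j}² | F_{n,j−1}] → σ² in probability as n → ∞, where σ² > 0 is a constant, and (ii) for every ε > 0, ∑_{j=1}^{r_n} E[Y_{n,j}² 1{|Y_{n,j}| ≥ ε}] → 0 as n → ∞. Then ∑_{j=1}^{r_n} Y_{n,j} converges in distribution to the Gaussian law N(0, σ²). -/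
open MeasureTheory ProbabilityTheory Filter
open scoped BigOperators Topology NNReal

/-!
If `w_j = E[Y_j² | F_j]` and `⟨S⟩_k = ∑_{j < k} w_j`, then `exp(i t S_k + t² ⟨S⟩_k / 2)` is almost
a martingale: factoring out the predictable part, its `k`-th increment is an `F_k`-measurable
multiple of `exp(i t Y_k) - exp(-t² w_k / 2)`. Up to second order in `Y_k` this difference is
`i t Y_k - t² (Y_k² - w_k) / 2`, whose conditional expectation vanishes, and the Lindeberg condition
makes the remainders sum to `o(1)`.

The exponential moments are harmless once `⟨S⟩` is bounded. As `⟨S⟩_{k + 1}` is `F_k`-measurable,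
the increments may be dropped from the moment `⟨S⟩` exceeds `σ² + ε` without losing the martingale
property, and with probability tending to one nothing is dropped. Replacing `⟨S⟩_r` by its limit
`σ²` gives `E exp(i t S_r) → exp(-t² σ² / 2)`, and Lévy's theorem concludes.
-/

section Exponential

lemma hasDerivAt_cexp_mul_sub_sum (n : ℕ) (z : ℂ) (s : ℝ) :
    HasDerivAt (fun s : ℝ ↦
        Complex.exp (s * z) - ∑ k ∈ Finset.range (n + 1), (s * z) ^ k / k.factorial)
      (z * (Complex.exp (s * z) - ∑ k ∈ Finset.range n, (s * z) ^ k / k.factorial)) s := by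
  have hlin : HasDerivAt (fun s : ℝ ↦ (s : ℂ) * z) z s := by
    simpa using (hasDerivAt_id s).ofReal_comp.mul_const z
  have hterm (k : ℕ) : HasDerivAt (fun s : ℝ ↦ ((s : ℂ) * z) ^ (k + 1) / (k + 1).factorial)
      (z * ((s * z) ^ k / k.factorial)) s := by
    refine ((hlin.pow (k + 1)).div_const _).congr_deriv ?_
    push_cast [Nat.factorial_succ]
    field_simp
  have hsum : HasDerivAt
      (fun s : ℝ ↦ 1 + ∑ k ∈ Finset.range n, ((s : ℂ) * z) ^ (k + 1) / (k + 1).factorial)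
      (∑ k ∈ Finset.range n, z * ((s * z) ^ k / k.factorial)) s :=
    (HasDerivAt.fun_sum fun k _ ↦ hterm k).const_add 1
  refine ((hlin.cexp.sub hsum).congr_of_eventuallyEq (.of_forall fun s ↦ ?_)).congr_deriv ?_
  · simp [Finset.sum_range_succ', add_comm]
  · rw [← Finset.mul_sum]
    ring

lemma norm_cexp_sub_sum_le (n : ℕ) {z : ℂ} (hz : z.re ≤ 0) :
    ‖Complex.exp z - ∑ k ∈ Finset.range n, z ^ k / k.factorial‖ ≤ ‖z‖ ^ n / n.factorial := by
  induction n generalizing z with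
  | zero => simpa [Complex.norm_exp] using hz
  | succ n ih =>
    let R (s : ℝ) : ℂ :=
      Complex.exp (s * z) - ∑ k ∈ Finset.range (n + 1), (s * z) ^ k / k.factorial
    let B (s : ℝ) : ℝ := (s * ‖z‖) ^ (n + 1) / (n + 1).factorial
    have hR (s : ℝ) := hasDerivAt_cexp_mul_sub_sum n z s
    have hB (s : ℝ) : HasDerivAt B (‖z‖ * ((s * ‖z‖) ^ n / n.factorial)) s := by
      refine ((((hasDerivAt_id s).mul_const ‖z‖).pow (n + 1)).div_const _).congr_deriv ?_
      push_cast [Nat.factorial_succ]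
      simp only [id_eq]
      field_simp
    have hR0 : ‖R 0‖ ≤ B 0 := by simp [R, B, Finset.sum_range_succ']
    have hderiv_le : ∀ s ∈ Set.Ico (0 : ℝ) 1,
        ‖z * (Complex.exp (s * z) - ∑ k ∈ Finset.range n, (s * z) ^ k / k.factorial)‖
          ≤ ‖z‖ * ((s * ‖z‖) ^ n / n.factorial) := by
      intro s hs
      have hsz : ((s : ℂ) * z).re ≤ 0 := by
        simpa using mul_nonpos_of_nonneg_of_nonpos hs.1 hz
      rw [norm_mul]
      gcongr
      simpa [abs_of_nonneg hs.1] using ih hsz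
    simpa [R, B] using image_norm_le_of_norm_deriv_right_le_deriv_boundary
      (fun s _ ↦ (hR s).continuousAt.continuousWithinAt) (fun s _ ↦ (hR s).hasDerivWithinAt)
      hR0 hB hderiv_le (Set.right_mem_Icc.2 zero_le_one)

lemma norm_cexp_sub_cexp_le (z w : ℂ) :
    ‖Complex.exp z - Complex.exp w‖ ≤ Real.exp (max z.re w.re) * ‖z - w‖ := by
  wlog h : z.re ≤ w.re generalizing z w
  · rw [norm_sub_rev, max_comm, norm_sub_rev z]
    exact this w z (le_of_not_ge h)
  have hre : (z - w).re ≤ 0 := by simpa using h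
  calc ‖Complex.exp z - Complex.exp w‖ = ‖Complex.exp w * (Complex.exp (z - w) - 1)‖ := by
        rw [mul_sub, ← Complex.exp_add, add_sub_cancel, mul_one]
    _ ≤ Real.exp (max z.re w.re) * ‖z - w‖ := by
        rw [norm_mul, Complex.norm_exp, max_eq_right h]
        gcongr
        simpa using norm_cexp_sub_sum_le 1 hre

lemma norm_cexp_mul_I_add_ofReal (a b : ℝ) :
    ‖Complex.exp (a * Complex.I + b)‖ = Real.exp b := by
  rw [Complex.norm_exp, Complex.add_re, Complex.re_ofReal_mul, Complex.I_re, mul_zero, zero_add,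
    Complex.ofReal_re]

lemma norm_cexp_mul_I_sub_le_cube (x : ℝ) :
    ‖Complex.exp (x * Complex.I) - (1 + x * Complex.I - x ^ 2 / 2)‖ ≤ |x| ^ 3 / 6 := by
  have h := norm_cexp_sub_sum_le 3 (z := x * Complex.I) (by simp)
  simpa [Finset.sum_range_succ, Nat.factorial, mul_pow, neg_div, ← sub_eq_add_neg] using h

lemma norm_cexp_mul_I_sub_le_sq (x : ℝ) :
    ‖Complex.exp (x * Complex.I) - (1 + x * Complex.I - x ^ 2 / 2)‖ ≤ x ^ 2 := by
  have h := norm_cexp_sub_sum_le 2 (z := x * Complex.I) (by simp)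
  calc ‖Complex.exp (x * Complex.I) - (1 + x * Complex.I - x ^ 2 / 2)‖
      = ‖(Complex.exp (x * Complex.I) - (1 + x * Complex.I)) + (x ^ 2 / 2 : ℂ)‖ := by ring_nf
    _ ≤ x ^ 2 / 2 + x ^ 2 / 2 := by
        refine (norm_add_le _ _).trans (add_le_add ?_ ?_)
        · simpa [Finset.sum_range_succ] using h
        · simp
    _ = x ^ 2 := add_halves _

lemma norm_cexp_neg_sub_le {u : ℝ} (hu : 0 ≤ u) :
    ‖Complex.exp (-u) - (1 - u)‖ ≤ u ^ 2 / 2 := by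
  simpa [Finset.sum_range_succ, sub_eq_add_neg] using
    norm_cexp_sub_sum_le 2 (z := -u) (by simpa using hu)

end Exponential

section SqTail

/-- The squared tail `x² 1{|x| ≥ ε}`, whose expectation enters the Lindeberg condition. -/
noncomputable def sqTail (ε x : ℝ) : ℝ := {y : ℝ | ε ≤ |y|}.indicator (fun y ↦ y ^ 2) x

lemma sqTail_of_le {ε x : ℝ} (h : ε ≤ |x|) : sqTail ε x = x ^ 2 :=
  Set.indicator_of_mem (s := {y : ℝ | ε ≤ |y|}) h _

lemma sqTail_of_lt {ε x : ℝ} (h : |x| < ε) : sqTail ε x = 0 :=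
  Set.indicator_of_notMem (s := {y : ℝ | ε ≤ |y|}) h.not_ge _

lemma sqTail_nonneg (ε x : ℝ) : 0 ≤ sqTail ε x :=
  Set.indicator_nonneg (fun y _ ↦ sq_nonneg y) x

lemma sqTail_zero (ε : ℝ) : sqTail ε 0 = 0 := by simp [sqTail, Set.indicator]

lemma sq_le_sq_add_sqTail (ε x : ℝ) : x ^ 2 ≤ ε ^ 2 + sqTail ε x := by
  rcases le_or_gt ε |x| with h | h
  · rw [sqTail_of_le h]
    exact le_add_of_nonneg_left (sq_nonneg ε)
  · rw [sqTail_of_lt h, add_zero]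
    exact sq_le_sq' (abs_lt.1 h).1.le (abs_lt.1 h).2.le

lemma measurable_sqTail (ε : ℝ) : Measurable (sqTail ε) :=
  (measurable_id.pow_const 2).indicator (measurableSet_le measurable_const measurable_id.abs)

lemma integrable_sqTail {Ω : Type*} {m0 : MeasurableSpace Ω} {P : Measure Ω} {X : Ω → ℝ}
    (hX : MemLp X 2 P) (ε : ℝ) : Integrable (fun ω ↦ sqTail ε (X ω)) P := by
  refine hX.integrable_sq.mono
    ((measurable_sqTail ε).comp_aemeasurable hX.1.aemeasurable).aestronglyMeasurable
    (ae_of_all _ fun ω ↦ norm_indicator_le_norm_self _ _)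

lemma norm_cexp_mul_I_sub_le_sqTail (t x : ℝ) {ε : ℝ} (hε : 0 ≤ ε) :
    ‖Complex.exp ((t * x : ℝ) * Complex.I) -
        (1 + (t * x : ℝ) * Complex.I - ((t * x : ℝ) : ℂ) ^ 2 / 2)‖
      ≤ |t| ^ 3 * ε / 6 * x ^ 2 + t ^ 2 * sqTail ε x := by
  rcases le_or_gt ε |x| with h | h
  · calc _ ≤ (t * x) ^ 2 := norm_cexp_mul_I_sub_le_sq _
      _ = t ^ 2 * sqTail ε x := by rw [sqTail_of_le h, mul_pow]
      _ ≤ _ := le_add_of_nonneg_left (by positivity)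
  · calc _ ≤ |t * x| ^ 3 / 6 := norm_cexp_mul_I_sub_le_cube _
      _ = |t| ^ 3 * |x| / 6 * x ^ 2 := by rw [abs_mul, ← sq_abs x]; ring
      _ ≤ |t| ^ 3 * ε / 6 * x ^ 2 := by gcongr
      _ = _ := by rw [sqTail_of_lt h, mul_zero, add_zero]

end SqTail

section ConditionalExpectation

variable {Ω : Type*} {m m0 : MeasurableSpace Ω} {P : Measure Ω}

lemma integral_condExp_smul {E : Type*} [NormedAddCommGroup E] [NormedSpace ℝ E] [CompleteSpace E]
    (hm : m ≤ m0) [SigmaFinite (P.trim hm)] {f : Ω → ℝ} {g : Ω → E} (hf : Integrable f P)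
    (hfg : Integrable (f • g) P) (hg : AEStronglyMeasurable[m] g P) :
    ∫ ω, (P[f | m]) ω • g ω ∂P = ∫ ω, f ω • g ω ∂P :=
  calc ∫ ω, (P[f | m]) ω • g ω ∂P = ∫ ω, (P[f • g | m]) ω ∂P :=
        (integral_congr_ae (condExp_smul_of_aestronglyMeasurable_right hf hfg hg)).symm
    _ = ∫ ω, f ω • g ω ∂P := integral_condExp hm

lemma memLp_top_condExp {X : Ω → ℝ} (hX0 : 0 ≤ᵐ[P] X) {C : ℝ} (hC : ∀ᵐ ω ∂P, (P[X | m]) ω ≤ C) :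
    MemLp (P[X | m]) ⊤ P := by
  refine memLp_top_of_bound integrable_condExp.aestronglyMeasurable C ?_
  filter_upwards [condExp_nonneg hX0, hC] with ω h0 hle
  rwa [Real.norm_of_nonneg h0]

lemma integral_sq_condExp_le (hm : m ≤ m0) [SigmaFinite (P.trim hm)] {X J : Ω → ℝ}
    (hX : Integrable X P) (hJ : Integrable J P) (hX0 : 0 ≤ᵐ[P] X) (hJ0 : 0 ≤ᵐ[P] J) {a C : ℝ}
    (hXJ : ∀ᵐ ω ∂P, X ω ≤ a + J ω) (hC : ∀ᵐ ω ∂P, (P[X | m]) ω ≤ C) :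
    ∫ ω, (P[X | m]) ω ^ 2 ∂P ≤ a * ∫ ω, X ω ∂P + C * ∫ ω, J ω ∂P := by
  have hXw : Integrable (X • P[X | m]) P := hX.smul_of_top_left (memLp_top_condExp hX0 hC)
  calc ∫ ω, (P[X | m]) ω ^ 2 ∂P = ∫ ω, X ω • (P[X | m]) ω ∂P := by
        rw [← integral_condExp_smul hm hX hXw stronglyMeasurable_condExp.aestronglyMeasurable]
        simp only [smul_eq_mul, sq]
    _ ≤ ∫ ω, (a * (P[X | m]) ω + C * J ω) ∂P := by
        refine integral_mono_ae hXw ((integrable_condExp.const_mul a).add (hJ.const_mul C)) ?_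
        filter_upwards [condExp_nonneg (m := m) hX0, hC, hXJ, hJ0] with ω hw0 hwC hXJ hJ0
        calc X ω * (P[X | m]) ω ≤ (a + J ω) * (P[X | m]) ω := by gcongr
          _ = a * (P[X | m]) ω + (P[X | m]) ω * J ω := by ring
          _ ≤ a * (P[X | m]) ω + C * J ω := by gcongr
    _ = a * ∫ ω, X ω ∂P + C * ∫ ω, J ω ∂P := by
        rw [integral_add (integrable_condExp.const_mul a) (hJ.const_mul C), integral_const_mul,
          integral_const_mul, integral_condExp hm]

lemma integral_smul_eq_zero_of_condExp_eq_zero {E : Type*} [NormedAddCommGroup E]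
    [NormedSpace ℝ E] [CompleteSpace E] (hm : m ≤ m0) [SigmaFinite (P.trim hm)] {f : Ω → ℝ}
    {g : Ω → E} (hf : Integrable f P) (hfg : Integrable (f • g) P)
    (hg : AEStronglyMeasurable[m] g P) (hf0 : P[f | m] =ᵐ[P] 0) :
    ∫ ω, f ω • g ω ∂P = 0 := by
  rw [← integral_condExp_smul hm hf hfg hg]
  exact integral_eq_zero_of_ae (hf0.mono fun ω h ↦ by simp [h])

lemma condExp_sub_condExp_eq_zero (hm : m ≤ m0) [SigmaFinite (P.trim hm)] {X : Ω → ℝ}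
    (hX : Integrable X P) : P[X - P[X | m] | m] =ᵐ[P] 0 := by
  refine (condExp_sub hX integrable_condExp m).trans ?_
  rw [condExp_of_stronglyMeasurable hm stronglyMeasurable_condExp integrable_condExp, sub_self]

end ConditionalExpectation

section OneStep

lemma norm_integral_le_of_norm_sub_le {E : Type*} [NormedAddCommGroup E] [NormedSpace ℝ E]
    {Ω : Type*} {m0 : MeasurableSpace Ω} {P : Measure Ω} {f D : Ω → E} {g : Ω → ℝ}
    (hD : Integrable D P) (hD0 : ∫ ω, D ω ∂P = 0) (hg : Integrable g P)
    (h : ∀ᵐ ω ∂P, ‖f ω - D ω‖ ≤ g ω) : ‖∫ ω, f ω ∂P‖ ≤ ∫ ω, g ω ∂P := by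
  by_cases hf : Integrable f P
  · rw [← sub_zero (∫ ω, f ω ∂P), ← hD0, ← integral_sub hf hD]
    exact norm_integral_le_of_norm_le hg h
  · rw [integral_undef hf, norm_zero]
    exact integral_nonneg_of_ae (h.mono fun ω hω ↦ (norm_nonneg _).trans hω)

lemma norm_cexp_sub_cexp_sub_le (t x : ℝ) {ε w : ℝ} (hε : 0 ≤ ε) (hw : 0 ≤ w) :
    ‖Complex.exp ((t * x : ℝ) * Complex.I) - Complex.exp (-(t ^ 2 * w / 2 : ℝ)) -
        (t * Complex.I * x - t ^ 2 / 2 * (x ^ 2 - w : ℝ))‖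
      ≤ |t| ^ 3 * ε / 6 * x ^ 2 + t ^ 2 * sqTail ε x + t ^ 4 / 8 * w ^ 2 := by
  have hsplit : Complex.exp ((t * x : ℝ) * Complex.I) - Complex.exp (-(t ^ 2 * w / 2 : ℝ)) -
        (t * Complex.I * x - t ^ 2 / 2 * (x ^ 2 - w : ℝ)) =
      (Complex.exp ((t * x : ℝ) * Complex.I) -
          (1 + (t * x : ℝ) * Complex.I - ((t * x : ℝ) : ℂ) ^ 2 / 2)) -
        (Complex.exp (-(t ^ 2 * w / 2 : ℝ)) - (1 - (t ^ 2 * w / 2 : ℝ))) := by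
    push_cast
    ring
  have hw2 : (t ^ 2 * w / 2) ^ 2 / 2 = t ^ 4 / 8 * w ^ 2 := by ring
  rw [hsplit, ← hw2]
  exact (norm_sub_le _ _).trans <| add_le_add (norm_cexp_mul_I_sub_le_sqTail t x hε)
    (norm_cexp_neg_sub_le (by positivity))

variable {Ω : Type*} {m m0 : MeasurableSpace Ω} {P : Measure Ω} [IsFiniteMeasure P]
  {Z : Ω → ℝ} {H : Ω → ℂ} {K C : ℝ}

lemma integral_mul_centered_eq_zero (hm : m ≤ m0) (hH : StronglyMeasurable[m] H)
    (hHK : ∀ᵐ ω ∂P, ‖H ω‖ ≤ K) (hZ : MemLp Z 2 P) (hZ0 : P[Z | m] =ᵐ[P] 0) (a b : ℂ) :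
    Integrable (fun ω ↦ H ω *
      (a * Z ω - b * (Z ω ^ 2 - (P[Z ^ 2 | m]) ω : ℝ))) P ∧
    ∫ ω, H ω * (a * Z ω - b * (Z ω ^ 2 - (P[Z ^ 2 | m]) ω : ℝ)) ∂P = 0 := by
  have hZ1 : Integrable Z P := hZ.integrable one_le_two
  have hD : Integrable (Z ^ 2 - P[Z ^ 2 | m]) P :=
    hZ.integrable_sq.sub integrable_condExp
  have hH' := (hH.mono hm).aestronglyMeasurable (μ := P)
  have hZH := hZ1.smul_bdd K hH' hHK
  have hDH := hD.smul_bdd K hH' hHK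
  have hsplit (ω : Ω) : H ω * (a * Z ω - b * (Z ω ^ 2 - (P[Z ^ 2 | m]) ω : ℝ)) =
      a * (Z • H) ω - b * ((Z ^ 2 - P[Z ^ 2 | m]) • H) ω := by
    simp only [Pi.smul_apply', Pi.sub_apply, Pi.pow_apply, Complex.real_smul]
    ring
  simp only [hsplit]
  refine ⟨(hZH.const_mul a).sub (hDH.const_mul b), ?_⟩
  rw [integral_sub (hZH.const_mul a) (hDH.const_mul b), integral_const_mul, integral_const_mul]
  simp only [Pi.smul_apply']
  rw [integral_smul_eq_zero_of_condExp_eq_zero hm hZ1 hZH hH.aestronglyMeasurable hZ0,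
    integral_smul_eq_zero_of_condExp_eq_zero hm hD hDH hH.aestronglyMeasurable
      (condExp_sub_condExp_eq_zero hm hZ.integrable_sq)]
  simp

lemma integral_sq_add_sqTail_add_sq_condExp_le (hm : m ≤ m0) (hZ : MemLp Z 2 P)
    (hC : ∀ᵐ ω ∂P, (P[Z ^ 2 | m]) ω ≤ C) (ε : ℝ) {a b c : ℝ} (hc : 0 ≤ c) :
    Integrable (fun ω ↦ a * Z ω ^ 2 + b * sqTail ε (Z ω) + c * (P[Z ^ 2 | m]) ω ^ 2) P ∧
    ∫ ω, (a * Z ω ^ 2 + b * sqTail ε (Z ω) + c * (P[Z ^ 2 | m]) ω ^ 2) ∂P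
      ≤ (a + c * ε ^ 2) * ∫ ω, Z ω ^ 2 ∂P + (b + c * C) * ∫ ω, sqTail ε (Z ω) ∂P := by
  have hsq : Integrable (Z ^ 2) P := hZ.integrable_sq
  have hsq0 : 0 ≤ᵐ[P] Z ^ 2 := ae_of_all P fun ω ↦ sq_nonneg _
  have hJ := integrable_sqTail hZ ε
  have hw2 : Integrable (fun ω ↦ (P[Z ^ 2 | m]) ω ^ 2) P :=
    ((memLp_top_condExp hsq0 hC).mono_exponent le_top).integrable_sq
  have hw2_le : ∫ ω, (P[Z ^ 2 | m]) ω ^ 2 ∂P ≤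
      ε ^ 2 * ∫ ω, Z ω ^ 2 ∂P + C * ∫ ω, sqTail ε (Z ω) ∂P :=
    integral_sq_condExp_le hm hsq hJ hsq0 (ae_of_all P fun ω ↦ sqTail_nonneg ε _)
      (ae_of_all P fun ω ↦ sq_le_sq_add_sqTail ε _) hC
  have h1 : Integrable (fun ω ↦ a * Z ω ^ 2) P := hsq.const_mul a
  have h2 := hJ.const_mul b
  have h12 : Integrable (fun ω ↦ a * Z ω ^ 2 + b * sqTail ε (Z ω)) P := h1.add h2
  have h3 := hw2.const_mul c
  refine ⟨h12.add h3, ?_⟩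
  rw [integral_add h12 h3, integral_add h1 h2]
  simp only [integral_const_mul]
  linarith [mul_le_mul_of_nonneg_left hw2_le hc]

theorem norm_integral_mul_cexp_sub_cexp_le (hm : m ≤ m0) (hH : StronglyMeasurable[m] H)
    (hHK : ∀ᵐ ω ∂P, ‖H ω‖ ≤ K) (hZ : MemLp Z 2 P) (hZ0 : P[Z | m] =ᵐ[P] 0)
    (hC : ∀ᵐ ω ∂P, (P[Z ^ 2 | m]) ω ≤ C) {ε : ℝ} (hε : 0 ≤ ε) (t : ℝ) :
    ‖∫ ω, H ω * (Complex.exp ((t * Z ω : ℝ) * Complex.I) -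
        Complex.exp (-(t ^ 2 * (P[Z ^ 2 | m]) ω / 2 : ℝ))) ∂P‖
      ≤ K * ((|t| ^ 3 * ε / 6 + t ^ 4 * ε ^ 2 / 8) * ∫ ω, Z ω ^ 2 ∂P +
          (t ^ 2 + t ^ 4 * C / 8) * ∫ ω, sqTail ε (Z ω) ∂P) := by
  rcases eq_zero_or_neZero P with rfl | _
  · simp
  obtain ⟨hDint, hD0⟩ := integral_mul_centered_eq_zero hm hH hHK hZ hZ0 (t * Complex.I) (t ^ 2 / 2)
  have hsq0 : 0 ≤ᵐ[P] fun ω ↦ Z ω ^ 2 := ae_of_all P fun ω ↦ sq_nonneg _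
  have hK0 : 0 ≤ K := let ⟨ω, hω⟩ := hHK.exists; (norm_nonneg _).trans hω
  have hbound : ∀ᵐ ω ∂P, ‖H ω * (Complex.exp ((t * Z ω : ℝ) * Complex.I) -
        Complex.exp (-(t ^ 2 * (P[Z ^ 2 | m]) ω / 2 : ℝ))) -
        H ω * (t * Complex.I * Z ω -
          t ^ 2 / 2 * (Z ω ^ 2 - (P[Z ^ 2 | m]) ω : ℝ))‖
      ≤ K * (|t| ^ 3 * ε / 6 * Z ω ^ 2 + t ^ 2 * sqTail ε (Z ω) +
          t ^ 4 / 8 * (P[Z ^ 2 | m]) ω ^ 2) := by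
    filter_upwards [hHK, condExp_nonneg (m := m) hsq0] with ω hHω hw0
    rw [← mul_sub, norm_mul]
    gcongr
    exact norm_cexp_sub_cexp_sub_le t (Z ω) hε hw0
  obtain ⟨hg, hg_le⟩ := integral_sq_add_sqTail_add_sq_condExp_le hm hZ hC ε
    (a := |t| ^ 3 * ε / 6) (b := t ^ 2) (c := t ^ 4 / 8) (by positivity)
  calc _ ≤ ∫ ω, K * (|t| ^ 3 * ε / 6 * Z ω ^ 2 + t ^ 2 * sqTail ε (Z ω) +
          t ^ 4 / 8 * (P[Z ^ 2 | m]) ω ^ 2) ∂P :=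
        norm_integral_le_of_norm_sub_le hDint hD0 (hg.const_mul K) hbound
    _ ≤ _ := by
        rw [integral_const_mul]
        gcongr
        exact hg_le.trans_eq (by ring)

end OneStep

section MartingaleDifference

/-- `Y 0, …, Y (r - 1)` is a square-integrable martingale difference sequence for `𝓕`. The
increment `Y j` is revealed at time `j + 1`. -/
structure IsL2MartingaleDiff {Ω : Type*} {m0 : MeasurableSpace Ω} (P : Measure Ω)
    (𝓕 : Filtration ℕ m0) (r : ℕ) (Y : ℕ → Ω → ℝ) : Prop where
  stronglyMeasurable : ∀ j < r, StronglyMeasurable[𝓕 (j + 1)] (Y j)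
  memLp_two : ∀ j < r, MemLp (Y j) 2 P
  condExp_eq_zero : ∀ j < r, P[Y j | 𝓕 j] =ᵐ[P] 0

/-- The predictable quadratic variation `⟨S⟩ₖ = ∑_{j < k} E[Yⱼ² | 𝓕ⱼ]` of the partial sums of
`Y`. -/
noncomputable def predQuadVar {Ω : Type*} {m0 : MeasurableSpace Ω} (P : Measure Ω)
    (𝓕 : Filtration ℕ m0) (Y : ℕ → Ω → ℝ) (k : ℕ) (ω : Ω) : ℝ :=
  ∑ j ∈ Finset.range k, (P[Y j ^ 2 | 𝓕 j]) ω

/-- The process `exp (i t Sₖ + t² ⟨S⟩ₖ / 2)`, which is a martingale up to Lindeberg errors. -/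
noncomputable def compensatedExp {Ω : Type*} {m0 : MeasurableSpace Ω} (P : Measure Ω)
    (𝓕 : Filtration ℕ m0) (Y : ℕ → Ω → ℝ) (t : ℝ) (k : ℕ) (ω : Ω) : ℂ :=
  Complex.exp ((t * ∑ j ∈ Finset.range k, Y j ω : ℝ) * Complex.I +
    (t ^ 2 * predQuadVar P 𝓕 Y k ω / 2 : ℝ))

variable {Ω : Type*} {m0 : MeasurableSpace Ω} {P : Measure Ω} {𝓕 : Filtration ℕ m0} {r k : ℕ}
  {Y : ℕ → Ω → ℝ} {C : ℝ}

lemma predQuadVar_succ (k : ℕ) (ω : Ω) :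
    predQuadVar P 𝓕 Y (k + 1) ω = predQuadVar P 𝓕 Y k ω + (P[Y k ^ 2 | 𝓕 k]) ω :=
  Finset.sum_range_succ _ k

lemma stronglyMeasurable_predQuadVar_succ (k : ℕ) :
    StronglyMeasurable[𝓕 k] (predQuadVar P 𝓕 Y (k + 1)) :=
  Finset.stronglyMeasurable_fun_sum _ fun _ hj ↦
    stronglyMeasurable_condExp.mono (𝓕.mono (Finset.mem_range_succ_iff.1 hj))

lemma measurable_predQuadVar (k : ℕ) : Measurable (predQuadVar P 𝓕 Y k) :=
  Finset.measurable_fun_sum _ fun j _ ↦ (stronglyMeasurable_condExp.mono (𝓕.le j)).measurable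

lemma ae_condExp_sq_nonneg (P : Measure Ω) (𝓕 : Filtration ℕ m0) (Y : ℕ → Ω → ℝ) :
    ∀ᵐ ω ∂P, ∀ j, 0 ≤ (P[Y j ^ 2 | 𝓕 j]) ω :=
  ae_all_iff.2 fun j ↦ condExp_nonneg (ae_of_all P fun ω ↦ sq_nonneg (Y j ω))

lemma ae_monotone_predQuadVar (P : Measure Ω) (𝓕 : Filtration ℕ m0) (Y : ℕ → Ω → ℝ) :
    ∀ᵐ ω ∂P, Monotone fun k ↦ predQuadVar P 𝓕 Y k ω := by
  filter_upwards [ae_condExp_sq_nonneg P 𝓕 Y] with ω h0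
  refine monotone_nat_of_le_succ fun k ↦ ?_
  rw [predQuadVar_succ]
  exact le_add_of_nonneg_right (h0 k)

lemma norm_compensatedExp (t : ℝ) (k : ℕ) (ω : Ω) :
    ‖compensatedExp P 𝓕 Y t k ω‖ = Real.exp (t ^ 2 * predQuadVar P 𝓕 Y k ω / 2) :=
  norm_cexp_mul_I_add_ofReal _ _

lemma ae_norm_compensatedExp_le (hC : ∀ᵐ ω ∂P, predQuadVar P 𝓕 Y r ω ≤ C) (hk : k ≤ r) (t : ℝ) :
    ∀ᵐ ω ∂P, ‖compensatedExp P 𝓕 Y t k ω‖ ≤ Real.exp (t ^ 2 * C / 2) := by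
  filter_upwards [hC, ae_monotone_predQuadVar P 𝓕 Y] with ω hω hmono
  rw [norm_compensatedExp]
  gcongr
  exact (hmono hk).trans hω

lemma integral_predQuadVar [IsFiniteMeasure P] (k : ℕ) :
    ∫ ω, predQuadVar P 𝓕 Y k ω ∂P = ∑ j ∈ Finset.range k, ∫ ω, Y j ω ^ 2 ∂P := by
  simp only [predQuadVar]
  rw [integral_finsetSum _ fun j _ ↦ integrable_condExp]
  exact Finset.sum_congr rfl fun j _ ↦ integral_condExp (𝓕.le j)

namespace IsL2MartingaleDiff

lemma of_integrable_sq (hmeas : ∀ j ∈ Finset.range r, StronglyMeasurable[𝓕 (j + 1)] (Y j))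
    (hsq : ∀ j ∈ Finset.range r, Integrable (fun ω ↦ Y j ω ^ 2) P)
    (hmds : ∀ j ∈ Finset.range r, P[Y j | 𝓕 j] =ᵐ[P] 0) : IsL2MartingaleDiff P 𝓕 r Y where
  stronglyMeasurable j hj := hmeas j (Finset.mem_range.2 hj)
  memLp_two j hj :=
    have hj := Finset.mem_range.2 hj
    (memLp_two_iff_integrable_sq
      ((hmeas j hj).mono (𝓕.le (j + 1))).aestronglyMeasurable).2 (hsq j hj)
  condExp_eq_zero j hj := hmds j (Finset.mem_range.2 hj)

lemma stronglyMeasurable_sum (hY : IsL2MartingaleDiff P 𝓕 r Y) (hk : k ≤ r) :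
    StronglyMeasurable[𝓕 k] fun ω ↦ ∑ j ∈ Finset.range k, Y j ω :=
  Finset.stronglyMeasurable_fun_sum _ fun j hj ↦
    have hjk : j < k := Finset.mem_range.1 hj
    (hY.stronglyMeasurable j (hjk.trans_le hk)).mono (𝓕.mono hjk)

lemma measurable_sum (hY : IsL2MartingaleDiff P 𝓕 r Y) (hk : k ≤ r) :
    Measurable fun ω ↦ ∑ j ∈ Finset.range k, Y j ω :=
  ((hY.stronglyMeasurable_sum hk).mono (𝓕.le k)).measurable

lemma integrable_compensatedExp [IsFiniteMeasure P] (hY : IsL2MartingaleDiff P 𝓕 r Y)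
    (hC : ∀ᵐ ω ∂P, predQuadVar P 𝓕 Y r ω ≤ C) (hk : k ≤ r) (t : ℝ) :
    Integrable (compensatedExp P 𝓕 Y t k) P := by
  have hS := hY.measurable_sum hk
  have hV : Measurable (predQuadVar P 𝓕 Y k) := measurable_predQuadVar k
  have hmeas : Measurable (compensatedExp P 𝓕 Y t k) := by
    unfold compensatedExp
    fun_prop
  exact .of_bound hmeas.aestronglyMeasurable _ (ae_norm_compensatedExp_le hC hk t)

lemma norm_integral_compensatedExp_succ_sub_le [IsFiniteMeasure P]
    (hY : IsL2MartingaleDiff P 𝓕 r Y) (hC : ∀ᵐ ω ∂P, predQuadVar P 𝓕 Y r ω ≤ C) (hk : k < r)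
    {ε : ℝ} (hε : 0 ≤ ε) (t : ℝ) :
    ‖∫ ω, compensatedExp P 𝓕 Y t (k + 1) ω ∂P - ∫ ω, compensatedExp P 𝓕 Y t k ω ∂P‖
      ≤ Real.exp (t ^ 2 * C / 2) * ((|t| ^ 3 * ε / 6 + t ^ 4 * ε ^ 2 / 8) * ∫ ω, Y k ω ^ 2 ∂P +
          (t ^ 2 + t ^ 4 * C / 8) * ∫ ω, sqTail ε (Y k ω) ∂P) := by
  let H (ω : Ω) : ℂ := Complex.exp ((t * ∑ j ∈ Finset.range k, Y j ω : ℝ) * Complex.I +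
    (t ^ 2 * predQuadVar P 𝓕 Y (k + 1) ω / 2 : ℝ))
  have hH : StronglyMeasurable[𝓕 k] H := by
    have hS := (hY.stronglyMeasurable_sum hk.le).measurable
    have hV := (stronglyMeasurable_predQuadVar_succ (P := P) (𝓕 := 𝓕) (Y := Y) k).measurable
    exact Measurable.stronglyMeasurable (by fun_prop)
  have hHK : ∀ᵐ ω ∂P, ‖H ω‖ ≤ Real.exp (t ^ 2 * C / 2) := by
    filter_upwards [ae_norm_compensatedExp_le hC hk t] with ω hω
    rwa [norm_cexp_mul_I_add_ofReal, ← norm_compensatedExp]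
  have hw : ∀ᵐ ω ∂P, (P[Y k ^ 2 | 𝓕 k]) ω ≤ C := by
    filter_upwards [hC, ae_monotone_predQuadVar P 𝓕 Y] with ω hω hmono
    have h0 : 0 ≤ predQuadVar P 𝓕 Y k ω := by simpa [predQuadVar] using hmono k.zero_le
    linarith [hmono hk, predQuadVar_succ (P := P) (𝓕 := 𝓕) (Y := Y) k ω]
  have hsub (ω : Ω) : compensatedExp P 𝓕 Y t (k + 1) ω - compensatedExp P 𝓕 Y t k ω =
      H ω * (Complex.exp ((t * Y k ω : ℝ) * Complex.I) -
        Complex.exp (-(t ^ 2 * (P[Y k ^ 2 | 𝓕 k]) ω / 2 : ℝ))) := by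
    simp only [H, compensatedExp, mul_sub, ← Complex.exp_add, Finset.sum_range_succ,
      predQuadVar_succ]
    congr 2 <;> push_cast <;> ring
  rw [← integral_sub (hY.integrable_compensatedExp hC hk t)
    (hY.integrable_compensatedExp hC hk.le t)]
  simp only [hsub]
  exact norm_integral_mul_cexp_sub_cexp_le (𝓕.le k) hH hHK (hY.memLp_two k hk)
    (hY.condExp_eq_zero k hk) hw hε t

theorem norm_integral_compensatedExp_sub_one_le [IsProbabilityMeasure P]
    (hY : IsL2MartingaleDiff P 𝓕 r Y) (hC : ∀ᵐ ω ∂P, predQuadVar P 𝓕 Y r ω ≤ C)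
    {ε : ℝ} (hε : 0 ≤ ε) (t : ℝ) :
    ‖∫ ω, compensatedExp P 𝓕 Y t r ω ∂P - 1‖
      ≤ Real.exp (t ^ 2 * C / 2) * ((|t| ^ 3 * ε / 6 + t ^ 4 * ε ^ 2 / 8) * C +
          (t ^ 2 + t ^ 4 * C / 8) * ∑ j ∈ Finset.range r, ∫ ω, sqTail ε (Y j ω) ∂P) := by
  have hsum_sq : ∑ j ∈ Finset.range r, ∫ ω, Y j ω ^ 2 ∂P ≤ C := by
    rw [← integral_predQuadVar (𝓕 := 𝓕)]
    simpa using integral_mono_ae (integrable_finsetSum _ fun j _ ↦ integrable_condExp)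
      (integrable_const C) hC
  have h0 : ∫ ω, compensatedExp P 𝓕 Y t 0 ω ∂P = 1 := by simp [compensatedExp, predQuadVar]
  rw [← h0, ← dist_eq_norm, dist_comm]
  calc dist (∫ ω, compensatedExp P 𝓕 Y t 0 ω ∂P) (∫ ω, compensatedExp P 𝓕 Y t r ω ∂P)
      ≤ ∑ k ∈ Finset.range r, Real.exp (t ^ 2 * C / 2) *
          ((|t| ^ 3 * ε / 6 + t ^ 4 * ε ^ 2 / 8) * ∫ ω, Y k ω ^ 2 ∂P +
            (t ^ 2 + t ^ 4 * C / 8) * ∫ ω, sqTail ε (Y k ω) ∂P) := by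
        refine dist_le_range_sum_of_dist_le
          (f := fun k ↦ ∫ ω, compensatedExp P 𝓕 Y t k ω ∂P) r fun {k} hk ↦ ?_
        rw [dist_comm, dist_eq_norm]
        exact hY.norm_integral_compensatedExp_succ_sub_le hC hk hε t
    _ ≤ _ := by
        rw [← Finset.mul_sum, Finset.sum_add_distrib, ← Finset.mul_sum, ← Finset.mul_sum]
        gcongr

end IsL2MartingaleDiff

end MartingaleDifference

section Truncation

/-- The increments `Y j` kept only while `⟨S⟩_{j + 1} ≤ C`, i.e. the martingale stopped just before
its predictable quadratic variation exceeds `C`. -/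
noncomputable def truncated {Ω : Type*} {m0 : MeasurableSpace Ω} (P : Measure Ω)
    (𝓕 : Filtration ℕ m0) (Y : ℕ → Ω → ℝ) (C : ℝ) (j : ℕ) : Ω → ℝ :=
  {ω | predQuadVar P 𝓕 Y (j + 1) ω ≤ C}.indicator (Y j)

lemma sum_indicator_partialSum_le {w : ℕ → ℝ} (hw : ∀ j, 0 ≤ w j) {C : ℝ} (hC : 0 ≤ C) (k : ℕ) :
    ∑ j ∈ Finset.range k, {i | ∑ l ∈ Finset.range (i + 1), w l ≤ C}.indicator w j ≤ C := by
  induction k with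
  | zero => simpa using hC
  | succ k ih =>
    by_cases hk : ∑ l ∈ Finset.range (k + 1), w l ≤ C
    · exact (Finset.sum_le_sum fun j _ ↦ Set.indicator_le_self' (fun i _ ↦ hw i) j).trans hk
    · rwa [Finset.sum_range_succ, Set.indicator_of_notMem (by simpa using hk), add_zero]

variable {Ω : Type*} {m0 : MeasurableSpace Ω} {P : Measure Ω} {𝓕 : Filtration ℕ m0} {r : ℕ}
  {Y : ℕ → Ω → ℝ} {C : ℝ}

lemma measurableSet_predQuadVar_succ_le (C : ℝ) (j : ℕ) :
    MeasurableSet[𝓕 j] {ω | predQuadVar P 𝓕 Y (j + 1) ω ≤ C} :=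
  (stronglyMeasurable_predQuadVar_succ j).measurable measurableSet_Iic

lemma truncated_sq (C : ℝ) (j : ℕ) :
    truncated P 𝓕 Y C j ^ 2 = {ω | predQuadVar P 𝓕 Y (j + 1) ω ≤ C}.indicator (Y j ^ 2) := by
  ext ω
  by_cases h : predQuadVar P 𝓕 Y (j + 1) ω ≤ C <;> simp [truncated, h]

lemma sqTail_truncated_le (ε C : ℝ) (j : ℕ) (ω : Ω) :
    sqTail ε (truncated P 𝓕 Y C j ω) ≤ sqTail ε (Y j ω) := by
  by_cases h : predQuadVar P 𝓕 Y (j + 1) ω ≤ C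
  · simp [truncated, h]
  · simp [truncated, h, sqTail_zero, sqTail_nonneg]

lemma norm_cexp_sub_compensatedExp_le {s ε : ℝ} {ω : Ω}
    (h : |predQuadVar P 𝓕 Y r ω - s| ≤ ε) (t : ℝ) :
    ‖Complex.exp ((t * ∑ j ∈ Finset.range r, Y j ω : ℝ) * Complex.I + (t ^ 2 * s / 2 : ℝ)) -
        compensatedExp P 𝓕 Y t r ω‖ ≤ Real.exp (t ^ 2 * (s + ε) / 2) * (t ^ 2 * ε / 2) := by
  refine (norm_cexp_sub_cexp_le _ _).trans ?_
  simp only [Complex.add_re, Complex.re_ofReal_mul, Complex.I_re, mul_zero, zero_add,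
    Complex.ofReal_re, add_sub_add_left_eq_sub, ← Complex.ofReal_sub, Complex.norm_real,
    Real.norm_eq_abs]
  obtain ⟨hl, hu⟩ := abs_le.1 h
  have hmax : max (t ^ 2 * s / 2) (t ^ 2 * predQuadVar P 𝓕 Y r ω / 2) ≤ t ^ 2 * (s + ε) / 2 := by
    rw [max_le_iff]
    constructor <;> gcongr <;> linarith
  have habs : |t ^ 2 * s / 2 - t ^ 2 * predQuadVar P 𝓕 Y r ω / 2| ≤ t ^ 2 * ε / 2 := by
    rw [← sub_div, ← mul_sub, abs_div, abs_mul, abs_sq, abs_two, abs_sub_comm]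
    gcongr
  gcongr

namespace IsL2MartingaleDiff

protected lemma truncated (hY : IsL2MartingaleDiff P 𝓕 r Y) [IsFiniteMeasure P] (C : ℝ) :
    IsL2MartingaleDiff P 𝓕 r (truncated P 𝓕 Y C) where
  stronglyMeasurable j hj := (hY.stronglyMeasurable j hj).indicator
    (𝓕.mono j.le_succ _ (measurableSet_predQuadVar_succ_le C j))
  memLp_two j hj := (hY.memLp_two j hj).indicator
    (𝓕.le j _ (measurableSet_predQuadVar_succ_le C j))
  condExp_eq_zero j hj := by
    filter_upwards [hY.condExp_eq_zero j hj, condExp_indicator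
      ((hY.memLp_two j hj).integrable one_le_two) (measurableSet_predQuadVar_succ_le C j)]
      with ω h0 hind
    rw [truncated, hind, Set.indicator_apply_eq_zero.2 fun _ ↦ h0, Pi.zero_apply]

lemma ae_condExp_truncated_sq (hY : IsL2MartingaleDiff P 𝓕 r Y) (C : ℝ) :
    ∀ᵐ ω ∂P, ∀ j < r, (P[truncated P 𝓕 Y C j ^ 2 | 𝓕 j]) ω =
      {i | predQuadVar P 𝓕 Y (i + 1) ω ≤ C}.indicator (fun i ↦ (P[Y i ^ 2 | 𝓕 i]) ω) j := by
  refine ae_all_iff.2 fun j ↦ ?_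
  by_cases hj : j < r
  · filter_upwards [condExp_indicator (f := Y j ^ 2) (hY.memLp_two j hj).integrable_sq
      (measurableSet_predQuadVar_succ_le C j)] with ω hω _
    rw [truncated_sq, hω]
    rfl
  · exact ae_of_all P fun ω h ↦ absurd h hj

lemma ae_predQuadVar_truncated_le (hY : IsL2MartingaleDiff P 𝓕 r Y) (hC : 0 ≤ C) :
    ∀ᵐ ω ∂P, predQuadVar P 𝓕 (truncated P 𝓕 Y C) r ω ≤ C := by
  filter_upwards [hY.ae_condExp_truncated_sq C, ae_condExp_sq_nonneg P 𝓕 Y] with ω htr h0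
  rw [predQuadVar, Finset.sum_congr rfl fun j hj ↦ htr j (Finset.mem_range.1 hj)]
  exact sum_indicator_partialSum_le h0 hC r

lemma ae_compensatedExp_truncated_eq (hY : IsL2MartingaleDiff P 𝓕 r Y) (C t : ℝ) :
    ∀ᵐ ω ∂P, predQuadVar P 𝓕 Y r ω ≤ C →
      compensatedExp P 𝓕 (truncated P 𝓕 Y C) t r ω = compensatedExp P 𝓕 Y t r ω := by
  filter_upwards [hY.ae_condExp_truncated_sq C, ae_monotone_predQuadVar P 𝓕 Y]
    with ω htr hmono hle
  have hkeep : ∀ j < r, predQuadVar P 𝓕 Y (j + 1) ω ≤ C := fun j hj ↦ (hmono hj).trans hle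
  have hsum : ∑ j ∈ Finset.range r, truncated P 𝓕 Y C j ω = ∑ j ∈ Finset.range r, Y j ω :=
    Finset.sum_congr rfl fun j hj ↦
      Set.indicator_of_mem (s := {ω | predQuadVar P 𝓕 Y (j + 1) ω ≤ C})
        (hkeep j (Finset.mem_range.1 hj)) _
  have hvar : predQuadVar P 𝓕 (truncated P 𝓕 Y C) r ω = predQuadVar P 𝓕 Y r ω := by
    refine Finset.sum_congr rfl fun j hj ↦ ?_
    rw [htr j (Finset.mem_range.1 hj)]
    exact Set.indicator_of_mem (s := {i | predQuadVar P 𝓕 Y (i + 1) ω ≤ C})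
        (hkeep j (Finset.mem_range.1 hj)) _
  rw [compensatedExp, compensatedExp, hsum, hvar]

lemma ae_norm_cexp_sub_compensatedExp_truncated_le (hY : IsL2MartingaleDiff P 𝓕 r Y) {s ε : ℝ}
    (hs : 0 ≤ s) (hε : 0 ≤ ε) (t : ℝ) :
    ∀ᵐ ω ∂P, ‖Complex.exp ((t * ∑ j ∈ Finset.range r, Y j ω : ℝ) * Complex.I +
          (t ^ 2 * s / 2 : ℝ)) - compensatedExp P 𝓕 (truncated P 𝓕 Y (s + ε)) t r ω‖
      ≤ Real.exp (t ^ 2 * (s + ε) / 2) * (t ^ 2 * ε / 2 +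
          {ω | ε ≤ |predQuadVar P 𝓕 Y r ω - s|}.indicator (fun _ ↦ 2) ω) := by
  filter_upwards [hY.ae_compensatedExp_truncated_eq (s + ε) t,
    ae_norm_compensatedExp_le (hY.ae_predQuadVar_truncated_le (add_nonneg hs hε)) le_rfl t]
    with ω heq hle
  by_cases hω : ε ≤ |predQuadVar P 𝓕 Y r ω - s|
  · have hexp : ‖Complex.exp ((t * ∑ j ∈ Finset.range r, Y j ω : ℝ) * Complex.I +
        (t ^ 2 * s / 2 : ℝ))‖ ≤ Real.exp (t ^ 2 * (s + ε) / 2) := by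
      rw [norm_cexp_mul_I_add_ofReal]
      gcongr
      exact le_add_of_nonneg_right hε
    rw [Set.indicator_of_mem (s := {ω | ε ≤ |predQuadVar P 𝓕 Y r ω - s|}) hω]
    refine (norm_sub_le_of_le hexp hle).trans ?_
    rw [← mul_two]
    gcongr
    exact le_add_of_nonneg_left (by positivity)
  · rw [Set.indicator_of_notMem (s := {ω | ε ≤ |predQuadVar P 𝓕 Y r ω - s|}) hω, add_zero,
      heq (by linarith [le_abs_self (predQuadVar P 𝓕 Y r ω - s)])]
    exact norm_cexp_sub_compensatedExp_le (not_le.1 hω).le t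

lemma norm_integral_cexp_sub_compensatedExp_truncated_le [IsProbabilityMeasure P]
    (hY : IsL2MartingaleDiff P 𝓕 r Y) {s ε : ℝ} (hs : 0 ≤ s) (hε : 0 ≤ ε) (t : ℝ) :
    ‖∫ ω, Complex.exp ((t * ∑ j ∈ Finset.range r, Y j ω : ℝ) * Complex.I +
          (t ^ 2 * s / 2 : ℝ)) ∂P -
        ∫ ω, compensatedExp P 𝓕 (truncated P 𝓕 Y (s + ε)) t r ω ∂P‖
      ≤ Real.exp (t ^ 2 * (s + ε) / 2) * (t ^ 2 * ε / 2 +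
          2 * P.real {ω | ε ≤ |predQuadVar P 𝓕 Y r ω - s|}) := by
  have hS := hY.measurable_sum le_rfl
  have hV : Measurable (predQuadVar P 𝓕 Y r) := measurable_predQuadVar r
  have hB : MeasurableSet {ω | ε ≤ |predQuadVar P 𝓕 Y r ω - s|} :=
    measurableSet_le measurable_const (hV.sub_const s).abs
  have hE : Integrable (fun ω ↦ Complex.exp ((t * ∑ j ∈ Finset.range r, Y j ω : ℝ) * Complex.I +
      (t ^ 2 * s / 2 : ℝ))) P :=
    .of_bound (Measurable.aestronglyMeasurable (by fun_prop)) (Real.exp (t ^ 2 * s / 2))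
      (ae_of_all P fun ω ↦ (norm_cexp_mul_I_add_ofReal _ _).le)
  have hind : Integrable ({ω | ε ≤ |predQuadVar P 𝓕 Y r ω - s|}.indicator fun _ ↦ (2 : ℝ)) P :=
    (integrable_const 2).indicator hB
  have hbound : Integrable (fun ω ↦ t ^ 2 * ε / 2 +
      {ω | ε ≤ |predQuadVar P 𝓕 Y r ω - s|}.indicator (fun _ ↦ (2 : ℝ)) ω) P :=
    (integrable_const _).add hind
  rw [← integral_sub hE ((hY.truncated _).integrable_compensatedExp
    (hY.ae_predQuadVar_truncated_le (add_nonneg hs hε)) le_rfl t)]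
  refine (norm_integral_le_of_norm_le (hbound.const_mul _)
    (hY.ae_norm_cexp_sub_compensatedExp_truncated_le hs hε t)).trans_eq ?_
  rw [integral_const_mul, integral_add (integrable_const _) hind, integral_indicator_const _ hB]
  simp [mul_comm]

theorem norm_integral_cexp_sub_le [IsProbabilityMeasure P]
    (hY : IsL2MartingaleDiff P 𝓕 r Y) {s ε : ℝ} (hs : 0 ≤ s) (hε : 0 ≤ ε) (t : ℝ) :
    ‖∫ ω, Complex.exp ((t * ∑ j ∈ Finset.range r, Y j ω : ℝ) * Complex.I) ∂P -
        Complex.exp (-(t ^ 2 * s / 2 : ℝ))‖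
      ≤ Real.exp (t ^ 2 * (s + ε) / 2) * (t ^ 2 * ε / 2 +
          2 * P.real {ω | ε ≤ |predQuadVar P 𝓕 Y r ω - s|} +
          ((|t| ^ 3 * ε / 6 + t ^ 4 * ε ^ 2 / 8) * (s + ε) +
            (t ^ 2 + t ^ 4 * (s + ε) / 8) *
              ∑ j ∈ Finset.range r, ∫ ω, sqTail ε (Y j ω) ∂P)) := by
  have hC : 0 ≤ s + ε := add_nonneg hs hε
  have hsplit : ∫ ω, Complex.exp ((t * ∑ j ∈ Finset.range r, Y j ω : ℝ) * Complex.I) ∂P -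
        Complex.exp (-(t ^ 2 * s / 2 : ℝ)) = Complex.exp (-(t ^ 2 * s / 2 : ℝ)) *
      (∫ ω, Complex.exp ((t * ∑ j ∈ Finset.range r, Y j ω : ℝ) * Complex.I +
          (t ^ 2 * s / 2 : ℝ)) ∂P - 1) := by
    simp only [Complex.exp_add, integral_mul_const]
    rw [mul_sub, mul_one, mul_left_comm, ← Complex.exp_add, neg_add_cancel, Complex.exp_zero,
      mul_one]
  have hle_one : ‖Complex.exp (-(t ^ 2 * s / 2 : ℝ))‖ ≤ 1 := by
    rw [Complex.norm_exp, Real.exp_le_one_iff, Complex.neg_re, Complex.ofReal_re]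
    exact neg_nonpos.2 (by positivity)
  have htail : ∑ j ∈ Finset.range r, ∫ ω, sqTail ε (truncated P 𝓕 Y (s + ε) j ω) ∂P ≤
      ∑ j ∈ Finset.range r, ∫ ω, sqTail ε (Y j ω) ∂P :=
    Finset.sum_le_sum fun j hj ↦ have hj := Finset.mem_range.1 hj
      integral_mono (integrable_sqTail ((hY.truncated _).memLp_two j hj) ε)
        (integrable_sqTail (hY.memLp_two j hj) ε) (sqTail_truncated_le ε _ j)
  rw [hsplit, norm_mul]
  refine (mul_le_of_le_one_left (norm_nonneg _) hle_one).trans <|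
    (norm_sub_le_norm_sub_add_norm_sub _ _ _).trans <| (add_le_add
      (hY.norm_integral_cexp_sub_compensatedExp_truncated_le hs hε t)
      ((hY.truncated _).norm_integral_compensatedExp_sub_one_le
        (hY.ae_predQuadVar_truncated_le hC) hε t)).trans ?_
  rw [← mul_add]
  gcongr

end IsL2MartingaleDiff

end Truncation

section Limit

lemma tendsto_of_dist_le_add {ι X : Type*} [PseudoMetricSpace X] {l : Filter ι} {a : ι → X}
    {x : X} {b : ℝ → ℝ} {β : ℝ → ι → ℝ} (hb : Tendsto b (𝓝[>] 0) (𝓝 0))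
    (hβ : ∀ ε > 0, Tendsto (β ε) l (𝓝 0)) (h : ∀ ε > 0, ∀ i, dist (a i) x ≤ b ε + β ε i) :
    Tendsto a l (𝓝 x) := by
  refine Metric.tendsto_nhds.2 fun δ hδ ↦ ?_
  obtain ⟨ε, hbε, hε⟩ := ((hb.eventually_lt_const (half_pos hδ)).and self_mem_nhdsWithin).exists
  filter_upwards [(hβ ε hε).eventually_lt_const (half_pos hδ)] with i hi
  linarith [h ε hε i]

lemma tendsto_integral_of_tendstoInDistribution {ι E Ω' : Type*} {l : Filter ι}
    [TopologicalSpace E] [MeasurableSpace E] [OpensMeasurableSpace E] {Ω : ι → Type*}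
    {mΩ : ∀ i, MeasurableSpace (Ω i)} {μ : ∀ i, Measure (Ω i)} [∀ i, IsProbabilityMeasure (μ i)]
    {mΩ' : MeasurableSpace Ω'} {μ' : Measure Ω'} [IsProbabilityMeasure μ'] {X : ∀ i, Ω i → E}
    {Z : Ω' → E} (h : TendstoInDistribution X l Z μ μ') (f : BoundedContinuousFunction E ℝ) :
    Tendsto (fun i ↦ ∫ ω, f (X i ω) ∂μ i) l (𝓝 (∫ ω, f (Z ω) ∂μ')) := by
  have hf := ProbabilityMeasure.tendsto_iff_forall_integral_tendsto.1 h.tendsto f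
  have hX (i : ι) : ∫ x, f x ∂(μ i).map (X i) = ∫ ω, f (X i ω) ∂μ i :=
    integral_map (h.forall_aemeasurable i) f.continuous.measurable.aestronglyMeasurable
  have hZ : ∫ x, f x ∂μ'.map Z = ∫ ω, f (Z ω) ∂μ' :=
    integral_map h.aemeasurable_limit f.continuous.measurable.aestronglyMeasurable
  simpa only [ProbabilityMeasure.coe_mk, hX, hZ] using hf

theorem tendsto_integral_cexp_sum {ι : Type*} {l : Filter ι} {Ω : ι → Type*}
    {mΩ : ∀ i, MeasurableSpace (Ω i)} {P : ∀ i, Measure (Ω i)} [∀ i, IsProbabilityMeasure (P i)]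
    {𝓕 : ∀ i, Filtration ℕ (mΩ i)} {r : ι → ℕ} {Y : ∀ i, ℕ → Ω i → ℝ}
    (hY : ∀ i, IsL2MartingaleDiff (P i) (𝓕 i) (r i) (Y i)) {s : ℝ} (hs : 0 ≤ s)
    (hvar : ∀ ε > 0, Tendsto
      (fun i ↦ (P i).real {ω | ε ≤ |predQuadVar (P i) (𝓕 i) (Y i) (r i) ω - s|}) l (𝓝 0))
    (hlindeberg : ∀ ε > 0, Tendsto
      (fun i ↦ ∑ j ∈ Finset.range (r i), ∫ ω, sqTail ε (Y i j ω) ∂P i) l (𝓝 0)) (t : ℝ) :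
    Tendsto (fun i ↦ ∫ ω, Complex.exp ((t * ∑ j ∈ Finset.range (r i), Y i j ω : ℝ) * Complex.I)
      ∂P i) l (𝓝 (Complex.exp (-(t ^ 2 * s / 2 : ℝ)))) := by
  let b (ε : ℝ) : ℝ := Real.exp (t ^ 2 * (s + ε) / 2) *
    (t ^ 2 * ε / 2 + (|t| ^ 3 * ε / 6 + t ^ 4 * ε ^ 2 / 8) * (s + ε))
  let β (ε : ℝ) (i : ι) : ℝ := Real.exp (t ^ 2 * (s + ε) / 2) *
    (2 * (P i).real {ω | ε ≤ |predQuadVar (P i) (𝓕 i) (Y i) (r i) ω - s|} +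
      (t ^ 2 + t ^ 4 * (s + ε) / 8) * ∑ j ∈ Finset.range (r i), ∫ ω, sqTail ε (Y i j ω) ∂P i)
  have hb : Tendsto b (𝓝[>] 0) (𝓝 0) := by
    have hcont : Continuous b := by fun_prop
    simpa [b] using (hcont.tendsto 0).mono_left nhdsWithin_le_nhds
  have hβ : ∀ ε > 0, Tendsto (β ε) l (𝓝 0) := fun ε hε ↦ by
    simpa [β] using (((hvar ε hε).const_mul 2).add
      ((hlindeberg ε hε).const_mul (t ^ 2 + t ^ 4 * (s + ε) / 8))).const_mul
        (Real.exp (t ^ 2 * (s + ε) / 2))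
  refine tendsto_of_dist_le_add hb hβ fun ε hε i ↦ ?_
  rw [dist_eq_norm]
  exact ((hY i).norm_integral_cexp_sub_le hs hε.le t).trans_eq (by ring)

end Limit

theorem martingale_clt_general {Ω : ℕ → Type*} {mΩ : ∀ n, MeasurableSpace (Ω n)}
    {P : ∀ n, Measure (Ω n)} [∀ n, IsProbabilityMeasure (P n)]
    {𝓕 : ∀ n, Filtration ℕ (mΩ n)} {r : ℕ → ℕ} {Y : ∀ n, ℕ → Ω n → ℝ}
    (hY : ∀ n, IsL2MartingaleDiff (P n) (𝓕 n) (r n) (Y n)) {σ2 : ℝ≥0}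
    (hvar : ∀ ε > 0, Tendsto
      (fun n ↦ (P n).real {ω | ε ≤ |predQuadVar (P n) (𝓕 n) (Y n) (r n) ω - σ2|}) atTop (𝓝 0))
    (hlindeberg : ∀ ε > 0, Tendsto
      (fun n ↦ ∑ j ∈ Finset.range (r n), ∫ ω, sqTail ε (Y n j ω) ∂P n) atTop (𝓝 0)) :
    TendstoInDistribution (fun n ω ↦ ∑ j ∈ Finset.range (r n), Y n j ω) atTop id P
      (gaussianReal 0 σ2) where
  forall_aemeasurable n := ((hY n).measurable_sum le_rfl).aemeasurable
  tendsto := by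
    refine ProbabilityMeasure.tendsto_iff_tendsto_charFun.2 fun t ↦ ?_
    have hchar (n : ℕ) : charFun ((P n).map fun ω ↦ ∑ j ∈ Finset.range (r n), Y n j ω) t =
        ∫ ω, Complex.exp ((t * ∑ j ∈ Finset.range (r n), Y n j ω : ℝ) * Complex.I) ∂P n := by
      rw [charFun_apply_real, integral_map ((hY n).measurable_sum le_rfl).aemeasurable
        (by fun_prop)]
      simp only [Complex.ofReal_mul]
    have hgauss : charFun ((gaussianReal 0 σ2).map id) t =
        Complex.exp (-(t ^ 2 * σ2 / 2 : ℝ)) := by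
      rw [Measure.map_id, charFun_gaussianReal]
      congr 1
      push_cast
      ring
    simpa only [ProbabilityMeasure.coe_mk, hchar, hgauss] using
      tendsto_integral_cexp_sum hY σ2.coe_nonneg hvar hlindeberg t

/-- Martingale central limit theorem (Billingsley): if for each `n`,
`Y n 0, …, Y n (r n - 1)` is a real martingale difference sequence with respect to the
increasing filtration `F n` (with `Y n j` being `F n (j+1)`-measurable and
`E[Y n j | F n j] = 0`), with finite second moments, such that
(i) the sum of the conditional variances converges in probability to a constant `σ² > 0`, and
(ii) the Lindeberg condition holds, then `∑_j Y n j` converges in distribution to `N(0, σ²)`,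
i.e. integrals of bounded continuous functions converge to the Gaussian ones. -/
theorem martingale_clt
    {Ω : Type*} [m0 : MeasurableSpace Ω] (P : Measure Ω) [IsProbabilityMeasure P]
    (r : ℕ → ℕ) (Y : ℕ → ℕ → Ω → ℝ) (F : ℕ → ℕ → MeasurableSpace Ω)
    (σ2 : ℝ≥0) (hσ2 : 0 < σ2)
    (hmono : ∀ n, Monotone (F n)) (hle : ∀ n j, F n j ≤ m0)
    (hmeas : ∀ n, ∀ j ∈ Finset.range (r n), StronglyMeasurable[F n (j + 1)] (Y n j))
    (hmds : ∀ n, ∀ j ∈ Finset.range (r n), P[Y n j | F n j] =ᵐ[P] 0)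
    (hL2 : ∀ n, ∀ j ∈ Finset.range (r n), Integrable (fun ω => (Y n j ω) ^ 2) P)
    (hvar : TendstoInMeasure P
        (fun n ω => ∑ j ∈ Finset.range (r n), (P[fun ω' => (Y n j ω') ^ 2 | F n j]) ω)
        atTop (fun _ => (σ2 : ℝ)))
    (hlindeberg : ∀ ε : ℝ, 0 < ε →
        Tendsto (fun n => ∑ j ∈ Finset.range (r n),
            ∫ ω, Set.indicator {ω' | ε ≤ |Y n j ω'|} (fun ω' => (Y n j ω') ^ 2) ω ∂P)
          atTop (𝓝 0)) :
    ∀ f : BoundedContinuousFunction ℝ ℝ,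
      Tendsto (fun n => ∫ ω, f (∑ j ∈ Finset.range (r n), Y n j ω) ∂P) atTop
        (𝓝 (∫ x, f x ∂(gaussianReal 0 σ2))) := by
  let 𝓕 (n : ℕ) : Filtration ℕ m0 := ⟨F n, hmono n, hle n⟩
  have hY (n : ℕ) : IsL2MartingaleDiff P (𝓕 n) (r n) (Y n) :=
    .of_integrable_sq (hmeas n) (hL2 n) (hmds n)
  have hQ : TendstoInMeasure P (fun n ↦ predQuadVar P (𝓕 n) (Y n) (r n)) atTop fun _ ↦ (σ2 : ℝ) :=
    hvar
  have hQ' : ∀ ε > 0, Tendsto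
      (fun n ↦ P.real {ω | ε ≤ |predQuadVar P (𝓕 n) (Y n) (r n) ω - σ2|}) atTop (𝓝 0) := by
    simpa only [Real.norm_eq_abs] using tendstoInMeasure_iff_measureReal_norm.1 hQ
  exact tendsto_integral_of_tendstoInDistribution (martingale_clt_general hY hQ' hlindeberg)
end
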